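/- arXiv:1810.03555 — 8 statements merged into one kernel-verified Lean document; each statement's English description precedes it below -/
import Mathlib

section
/- Let H₁₀ denote the regular 10-gon conv{(cos(2kπ/10), sin(2kπ/10)) : k = 0, 1, …, 9} ⊂ ℝ² and let t > 0. The following are equivalent: (i) t·H₁₀ contains a lattice point of ℤ² in any position; (ii) t·H₁₀ contains the square [−1/2, 1/2]²; (iii) t ≥ (cos(π/5) − sin(π/5) + sin(2π/5) − cos(2π/5))/(2·sin(π/5)). -/
/-!
Write `A = √2/2 · cos(π/20)`. The number in (iii) equals `A / cos(π/10)`, and `cos(π/10)` is the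
inradius of `H₁₀`, so (iii) says that `t·H₁₀` has inradius at least `A` (`threshold_iff`). Among the
edge functionals of the 10-gon, the one whose normal has angle `3π/10` takes at `(1/2, 1/2)` the
largest value, `A`; hence (ii) and (iii) are equivalent (`square_subset`, `threshold_of_mem`). If
`t·H₁₀ + (1/2, 1/2)` contains a lattice point, then `t·H₁₀` contains a point whose coordinates are at
least `1/2` in absolute value, and the same functional gives (iii).

For (iii) ⇒ (i), undo the isometry, so that the lattice `ℤ²` stays fixed and the decagon of inradius
`A` has normals `ψ + kπ/5` for an arbitrary `ψ`. The symmetries of the decagon and of `ℤ²` reduce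
this to `ψ = π/4 + η` with `0 ≤ η ≤ π/20` (`decagon_covers`). For `η < π/20` the unit square is not
contained in the decagon, but a lattice triangle congruent to half of it is: with
`ρ = 1 - cos(π/20)/cos η`, the corners `(1/2, 1/2)`, `(1/2, -1/2)`, `(-1/2, 1/2)` translated by
`-(ρ/2, ρ/2)` lie in the decagon (`cover_base`). A centrally symmetric convex set containing such a
triangle contains the hexagon spanned by the triangle and its reflection in the origin, and the
lattice translates of that hexagon cover the plane (`hexagon_cover`).
-/

open Set Pointwise Real MeasureTheory

noncomputable section

abbrev E2 := EuclideanSpace ℝ (Fin 2)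

def v2 (a b : ℝ) : E2 := (WithLp.equiv 2 (Fin 2 → ℝ)).symm ![a, b]

/-- The lattice `ℤ² ⊆ ℝ²`. -/
def latticeZ2 : Set E2 := {v | ∀ i, ∃ m : ℤ, v i = (m : ℝ)}

/-- `K` contains a lattice point of `ℤ²` in any position: every rotated and translated
copy `Q(K) + x` of `K` contains a point of `ℤ²`. -/
def CoversAnyPosition (K : Set E2) : Prop :=
  ∀ (Q : E2 ≃ₗᵢ[ℝ] E2) (x : E2), ∃ z ∈ (fun y => Q y + x) '' K, z ∈ latticeZ2

/-- The regular `m`-gon `conv{(cos(2kπ/m), sin(2kπ/m)) : k = 0, …, m-1}`. -/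
def Hgon (m : ℕ) : Set E2 :=
  convexHull ℝ
    {p | ∃ k : ℕ, k < m ∧ p = v2 (cos (2 * k * π / m)) (sin (2 * k * π / m))}

/-! ### Decagons as intersections of strips, and the hexagon covering argument -/

/-- The closed regular 10-gon of inradius `r` centred at the origin whose edge normals have angles
`ψ + kπ/5`, given as an intersection of strips. Opposite normals give the same strip, hence the
absolute value. -/
def decagon (ψ r : ℝ) : Set (ℝ × ℝ) :=
  {v | ∀ k : ℤ, |v.1 * cos (ψ + k * (π / 5)) + v.2 * sin (ψ + k * (π / 5))| ≤ r}

lemma decagon_neg {ψ r : ℝ} {a b : ℝ} (h : (a, b) ∈ decagon ψ r) : (-a, -b) ∈ decagon ψ r := by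
  intro k
  have := h k
  rw [← abs_neg]
  convert this using 2
  simp only
  ring

/-- Convexity of the decagon, for combinations of three points in coordinates. -/
lemma decagon_comb {ψ r : ℝ} {a₁ b₁ a₂ b₂ a₃ b₃ : ℝ} (h₁ : (a₁, b₁) ∈ decagon ψ r)
    (h₂ : (a₂, b₂) ∈ decagon ψ r) (h₃ : (a₃, b₃) ∈ decagon ψ r) {w₁ w₂ w₃ a b : ℝ}
    (hw₁ : 0 ≤ w₁) (hw₂ : 0 ≤ w₂) (hw₃ : 0 ≤ w₃) (hw : w₁ + w₂ + w₃ = 1)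
    (ha : a = w₁ * a₁ + w₂ * a₂ + w₃ * a₃) (hb : b = w₁ * b₁ + w₂ * b₂ + w₃ * b₃) :
    (a, b) ∈ decagon ψ r := by
  intro k
  have e₁ := abs_le.1 (h₁ k)
  have e₂ := abs_le.1 (h₂ k)
  have e₃ := abs_le.1 (h₃ k)
  simp only at e₁ e₂ e₃ ⊢
  generalize cos (ψ + k * (π / 5)) = C at *
  generalize sin (ψ + k * (π / 5)) = S at *
  have e : a * C + b * S
      = w₁ * (a₁ * C + b₁ * S) + w₂ * (a₂ * C + b₂ * S) + w₃ * (a₃ * C + b₃ * S) := by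
    rw [ha, hb]; ring
  have hr : r = w₁ * r + w₂ * r + w₃ * r := by rw [← add_mul, ← add_mul, hw, one_mul]
  rw [e, abs_le]
  constructor
  · rw [hr]
    linarith [mul_le_mul_of_nonneg_left e₁.1 hw₁, mul_le_mul_of_nonneg_left e₂.1 hw₂,
      mul_le_mul_of_nonneg_left e₃.1 hw₃]
  · rw [hr]
    linarith [mul_le_mul_of_nonneg_left e₁.2 hw₁, mul_le_mul_of_nonneg_left e₂.2 hw₂,
      mul_le_mul_of_nonneg_left e₃.2 hw₃]

/-- Suppose the decagon contains `p = (1/2-h, 1/2-h)`, `q = (1/2-h, -1/2-h)` and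
`r = (-1/2-h, 1/2-h)`. Let `o = (-1/2-h, -1/2-h)` be the fourth vertex of the unit square. The lower
half of the triangle `o q r` is covered by the triangle `(-p) q r` and by the triangle `o q (-p)`,
which is the translate of `r p (-q)` by `(0, -1)`. -/
lemma anti_triangle {ψ r h : ℝ} (h0 : 0 ≤ h) (h1 : h < 1 / 4)
    (hp : (1 / 2 - h, 1 / 2 - h) ∈ decagon ψ r) (hq : (1 / 2 - h, -1 / 2 - h) ∈ decagon ψ r)
    (hr : (-1 / 2 - h, 1 / 2 - h) ∈ decagon ψ r) {a b : ℝ} (hb : 0 ≤ b) (hba : b ≤ a)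
    (hab : a + b ≤ 1) :
    (a - 1 / 2 - h, b - 1 / 2 - h) ∈ decagon ψ r ∨
      (a - 1 / 2 - h, b + 1 - 1 / 2 - h) ∈ decagon ψ r := by
  rcases le_or_gt (2 * h * (1 - a - b)) (b * (1 - 4 * h)) with hc | hc
  · left
    have hpos : 0 < 1 - 4 * h := by linarith
    have hl : 0 ≤ (1 - a - b) / (1 - 4 * h) := div_nonneg (by linarith) hpos.le
    have hle : (1 - a - b) / (1 - 4 * h) * (2 * h) ≤ b := by
      rw [div_mul_eq_mul_div, div_le_iff₀ hpos]; linarith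
    have hd : (1 - a - b) / (1 - 4 * h) * (1 - 4 * h) = 1 - a - b := div_mul_cancel₀ _ hpos.ne'
    generalize (1 - a - b) / (1 - 4 * h) = l at *
    refine decagon_comb (decagon_neg hp) hq hr (w₁ := l) (w₂ := a - l * (2 * h))
      (w₃ := b - l * (2 * h)) hl (by linarith) (by linarith) ?_ ?_ ?_
    · linarith
    · linear_combination (1 / 2 + h) * hd
    · linear_combination (1 / 2 + h) * hd
  · right
    have hpos : 0 < 2 * h := by
      rcases h0.eq_or_lt with h0 | h0
      · subst h0; linarith
      · linarith
    have hl : 0 ≤ b / (2 * h) := div_nonneg hb hpos.le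
    have hle : b / (2 * h) ≤ 1 - a + b := by
      rw [div_le_iff₀ hpos]; linarith
    have hd : b / (2 * h) * (2 * h) = b := div_mul_cancel₀ _ hpos.ne'
    generalize b / (2 * h) = l at *
    refine decagon_comb (decagon_neg hq) hp hr (w₁ := l) (w₂ := a - b)
      (w₃ := 1 - l - (a - b)) hl (by linarith) (by linarith) ?_ ?_ ?_ <;> linarith

/-- Reflection in the diagonal `x = y`. -/
lemma decagon_swap {ψ r a b : ℝ} (h : (a, b) ∈ decagon ψ r) : (b, a) ∈ decagon (π / 2 - ψ) r := by
  intro k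
  have := h (-k)
  simp only at this ⊢
  have e : π / 2 - ψ + k * (π / 5) = π / 2 - (ψ + ((-k : ℤ) : ℝ) * (π / 5)) := by
    push_cast; ring
  rw [e, cos_pi_div_two_sub, sin_pi_div_two_sub, add_comm]
  exact this

/-- If the decagon contains `p`, `q`, `r` as below, then it contains the hexagon with vertices
`±p, ±q, ±r`, whose lattice translates cover the plane. -/
lemma hexagon_cover {ψ r h : ℝ} (h0 : 0 ≤ h) (h1 : h < 1 / 4)
    (hp : (1 / 2 - h, 1 / 2 - h) ∈ decagon ψ r) (hq : (1 / 2 - h, -1 / 2 - h) ∈ decagon ψ r)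
    (hr : (-1 / 2 - h, 1 / 2 - h) ∈ decagon ψ r) (x y : ℝ) :
    ∃ m n : ℤ, ((m : ℝ) - x, (n : ℝ) - y) ∈ decagon ψ r := by
  set a := Int.fract (-x + 1 / 2 + h) with ha
  set b := Int.fract (-y + 1 / 2 + h) with hb
  have ha0 : 0 ≤ a := Int.fract_nonneg _
  have hb0 : 0 ≤ b := Int.fract_nonneg _
  have ha1 : a < 1 := Int.fract_lt_one _
  have hb1 : b < 1 := Int.fract_lt_one _
  have hx : -((⌊-x + 1 / 2 + h⌋ : ℤ) : ℝ) - x = a - 1 / 2 - h := by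
    rw [ha, Int.fract]; ring
  have hy : -((⌊-y + 1 / 2 + h⌋ : ℤ) : ℝ) - y = b - 1 / 2 - h := by
    rw [hb, Int.fract]; ring
  -- From here on only the position `(a, b)` relative to the corner `o` of the unit square matters.
  generalize ⌊-x + 1 / 2 + h⌋ = M at hx
  generalize ⌊-y + 1 / 2 + h⌋ = N at hy
  clear_value a b
  suffices H : ∃ i j : ℤ, (a + i - 1 / 2 - h, b + j - 1 / 2 - h) ∈ decagon ψ r by
    obtain ⟨i, j, H⟩ := H
    refine ⟨-M + i, -N + j, ?_⟩
    convert H using 2 <;> push_cast <;> linarith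
  rcases le_or_gt 1 (a + b) with hab | hab
  -- The half `a + b ≥ 1` of the unit square is the triangle `p q r` itself.
  · refine ⟨0, 0, decagon_comb hr hq hp (w₁ := 1 - a) (w₂ := 1 - b) (w₃ := a + b - 1) ?_ ?_ ?_ ?_ ?_
      ?_⟩ <;> push_cast <;> linarith
  · rcases le_total b a with hba | hba
    · rcases anti_triangle h0 h1 hp hq hr hb0 hba hab.le with H | H
      · exact ⟨0, 0, by simpa using H⟩
      · exact ⟨0, 1, by simpa using H⟩
    · rcases anti_triangle h0 h1 (decagon_swap hp) (decagon_swap hr) (decagon_swap hq) ha0 hba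
        (by linarith) with H | H
      · exact ⟨0, 0, by simpa using decagon_swap H⟩
      · exact ⟨1, 0, by simpa using decagon_swap H⟩

/-! ### Trigonometric estimates -/

lemma abs_trig_mod (η : ℝ) (k : ℤ) : ∃ i : ℕ, i < 5 ∧
    |cos (η + k * (π / 5))| = |cos (η + i * (π / 5))| ∧
    |sin (η + k * (π / 5))| = |sin (η + i * (π / 5))| := by
  have h0 := Int.emod_nonneg k (show (5 : ℤ) ≠ 0 by norm_num)
  refine ⟨(k % 5).toNat, by omega, ?_⟩
  have e : η + k * (π / 5) = η + ((k % 5).toNat : ℝ) * (π / 5) + ((k / 5 : ℤ) : ℝ) * π := by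
    have h1 : ((k % 5).toNat : ℝ) = ((k % 5 : ℤ) : ℝ) := by
      exact_mod_cast Int.toNat_of_nonneg h0
    have h2 : (k : ℝ) = 5 * ((k / 5 : ℤ) : ℝ) + ((k % 5 : ℤ) : ℝ) := by
      exact_mod_cast (Int.mul_ediv_add_emod k 5).symm
    rw [h1, h2]; ring
  rw [e, cos_add_int_mul_pi, sin_add_int_mul_pi, abs_mul, abs_mul, abs_neg_one_zpow]
  simp

lemma abs_cos_le {η : ℝ} (h0 : 0 ≤ η) (h1 : η ≤ π / 10) (k : ℤ) :
    |cos (η + k * (π / 5))| ≤ cos η := by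
  have hπ := pi_pos
  obtain ⟨i, hi, e, -⟩ := abs_trig_mod η k
  rw [e]
  -- For `i ≤ 2` the angle lies in `[η, π/2]`; for `i = 3, 4` its supplement does.
  rcases Nat.lt_or_ge i 3 with h | h
  · have : (i : ℝ) ≤ 2 := by exact_mod_cast (by omega : i ≤ 2)
    have hi0 : (0 : ℝ) ≤ i := i.cast_nonneg
    rw [abs_of_nonneg (cos_nonneg_of_mem_Icc ⟨by nlinarith, by nlinarith⟩)]
    exact cos_le_cos_of_nonneg_of_le_pi h0 (by nlinarith) (by nlinarith)
  · have h3 : (3 : ℝ) ≤ i := by exact_mod_cast h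
    have h4 : (i : ℝ) ≤ 4 := by exact_mod_cast (by omega : i ≤ 4)
    rw [← abs_neg, ← cos_pi_sub,
      abs_of_nonneg (cos_nonneg_of_mem_Icc ⟨by nlinarith, by nlinarith⟩)]
    exact cos_le_cos_of_nonneg_of_le_pi h0 (by nlinarith) (by nlinarith)

lemma cos_pi_div_ten : cos (π / 10) = 2 * cos (π / 20) ^ 2 - 1 := by
  rw [← cos_two_mul]; congr 1; ring

/-- The bound behind the choice of the shift in `cover_base`, where `ρ = 1 - cos(π/20)/cos η`.
The index `k ≡ 2 (mod 5)` is the critical one; it reduces to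
`cos η + cos(π/10 - η) ≤ 2 cos(π/20)`. For the other indices `|sin|` is at most
`cos(π/10) = 2cos²(π/20) - 1`, and `ρ ≤ 1 - cos(π/20)` suffices. -/
lemma abs_sin_add_le {η ρ : ℝ} (h0 : 0 ≤ η) (h1 : η ≤ π / 20)
    (hρ : ρ * cos η = cos η - cos (π / 20)) (k : ℤ) :
    |sin (η + k * (π / 5))| + ρ * |cos (η + k * (π / 5))| ≤ cos (π / 20) := by
  have hπ := pi_pos
  have hcη : 0 < cos η := cos_pos_of_mem_Ioo ⟨by linarith, by linarith⟩
  have hc9 : 0 < cos (π / 20) := cos_pos_of_mem_Ioo ⟨by linarith, by linarith⟩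
  have hmono : cos (π / 20) ≤ cos η := cos_le_cos_of_nonneg_of_le_pi h0 (by linarith) h1
  have hρ0 : 0 ≤ ρ := by
    by_contra hn
    nlinarith
  have hρ1 : ρ ≤ 1 - cos (π / 20) := by
    have := cos_le_one η
    by_contra hn
    nlinarith
  obtain ⟨i, hi, e, e'⟩ := abs_trig_mod η k
  rw [e, e']
  by_cases h2 : i = 2
  · subst h2
    have es : sin (η + (2 : ℕ) * (π / 5)) = cos (π / 10 - η) := by
      rw [← cos_pi_div_two_sub]; congr 1; push_cast; ring
    have ec : cos (η + (2 : ℕ) * (π / 5)) = sin (π / 10 - η) := by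
      rw [← sin_pi_div_two_sub]; congr 1; push_cast; ring
    rw [es, ec, abs_of_nonneg (cos_nonneg_of_mem_Icc ⟨by linarith, by linarith⟩),
      abs_of_nonneg (sin_nonneg_of_nonneg_of_le_pi (by linarith) (by linarith))]
    have hs : sin (π / 10 - η) ≤ cos η := by
      rw [← cos_pi_div_two_sub]
      exact cos_le_cos_of_nonneg_of_le_pi h0 (by linarith) (by linarith)
    have h3 : cos η + cos (π / 10 - η) ≤ 2 * cos (π / 20) := by
      have : cos η + cos (π / 10 - η) = 2 * cos (π / 20) * cos (η - π / 20) := by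
        rw [cos_add_cos]
        congr 3 <;> ring
      rw [this]
      nlinarith [cos_le_one (η - π / 20)]
    have h4 := mul_le_mul_of_nonneg_left hs hρ0
    linarith
  · have hs : |sin (η + i * (π / 5))| ≤ cos (π / 10) := by
      have e18 : cos (π / 10) = sin (2 * π / 5) := by
        rw [← cos_pi_div_two_sub]; congr 1; ring
      rw [e18]
      rcases Nat.lt_or_ge i 2 with h | h
      · have h4 : (i : ℝ) ≤ 1 := by exact_mod_cast (by omega : i ≤ 1)
        have hi0 : (0 : ℝ) ≤ i := i.cast_nonneg
        rw [abs_of_nonneg (sin_nonneg_of_nonneg_of_le_pi (by nlinarith) (by nlinarith))]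
        exact sin_le_sin_of_le_of_le_pi_div_two (by nlinarith) (by nlinarith) (by nlinarith)
      · have h3 : (3 : ℝ) ≤ i := by exact_mod_cast (by omega : 3 ≤ i)
        have h4 : (i : ℝ) ≤ 4 := by exact_mod_cast (by omega : i ≤ 4)
        rw [← sin_pi_sub, 
          abs_of_nonneg (sin_nonneg_of_nonneg_of_le_pi (by nlinarith) (by nlinarith))]
        exact sin_le_sin_of_le_of_le_pi_div_two (by nlinarith) (by nlinarith) (by nlinarith)
    have h5 := mul_le_mul_of_nonneg_left (abs_cos_le_one (η + i * (π / 5))) hρ0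
    rw [cos_pi_div_ten] at hs
    nlinarith [cos_le_one (π / 20)]

/-! ### Covering by decagons in every direction -/

lemma corner_cos (ω : ℝ) : cos (π / 4 + ω) + sin (π / 4 + ω) = 2 * cos (π / 4) * cos ω := by
  rw [cos_add, sin_add, sin_pi_div_four, cos_pi_div_four]; ring

lemma corner_sin (ω : ℝ) : sin (π / 4 + ω) - cos (π / 4 + ω) = 2 * cos (π / 4) * sin ω := by
  rw [cos_add, sin_add, sin_pi_div_four, cos_pi_div_four]; ring

/-- Covering for normals `π/4 + η + kπ/5` with `0 ≤ η ≤ π/20`. The corner `(1/2, 1/2)` of the unit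
square may stick out of the decagon, so the three corners other than `(-1/2, -1/2)` are moved by
`-(ρ/2, ρ/2)`, where `ρ` is such that the first one lands on the edge with normal `π/4 + η`. -/
lemma cover_base {η : ℝ} (h0 : 0 ≤ η) (h1 : η ≤ π / 20) (x y : ℝ) :
    ∃ m n : ℤ, ((m : ℝ) - x, (n : ℝ) - y) ∈ decagon (π / 4 + η) (cos (π / 4) * cos (π / 20)) := by
  have hπ := pi_pos
  have hcη : 0 < cos η := cos_pos_of_mem_Ioo ⟨by linarith, by linarith⟩
  have hc9 : 1 / 2 < cos (π / 20) := by
    rw [← cos_pi_div_three]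
    exact cos_lt_cos_of_nonneg_of_le_pi (by linarith) (by linarith) (by linarith)
  have hmono : cos (π / 20) ≤ cos η := cos_le_cos_of_nonneg_of_le_pi h0 (by linarith) h1
  obtain ⟨ρ, hρ⟩ : ∃ ρ : ℝ, ρ * cos η = cos η - cos (π / 20) :=
    ⟨(cos η - cos (π / 20)) / cos η, div_mul_cancel₀ _ hcη.ne'⟩
  have hρ0 : 0 ≤ ρ := by
    by_contra hn
    nlinarith
  have hρ1 : ρ < 1 / 2 := by
    have := cos_le_one η
    by_contra hn
    nlinarith
  have hc : 0 ≤ cos (π / 4) := cos_nonneg_of_mem_Icc ⟨by linarith, by linarith⟩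
  refine hexagon_cover (h := ρ / 2) (by linarith) (by linarith) ?_ ?_ ?_ x y
  · intro k
    have e : (1 / 2 - ρ / 2) * cos (π / 4 + η + k * (π / 5))
        + (1 / 2 - ρ / 2) * sin (π / 4 + η + k * (π / 5))
        = cos (π / 4) * ((1 - ρ) * cos (η + k * (π / 5))) := by
      rw [add_assoc]
      linear_combination (1 - ρ) / 2 * corner_cos (η + k * (π / 5))
    simp only
    rw [e, abs_mul, abs_of_nonneg hc, abs_mul, abs_of_nonneg (by linarith : 0 ≤ 1 - ρ)]
    refine mul_le_mul_of_nonneg_left ?_ hc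
    have := mul_le_mul_of_nonneg_left (abs_cos_le h0 (by linarith : η ≤ π / 10) k) (by linarith : 0 ≤ 1 - ρ)
    linarith
  all_goals
    intro k
    have hb := abs_sin_add_le h0 h1 hρ k
    simp only
    rw [add_assoc]
    have hcc := corner_cos (η + k * (π / 5))
    have hcs := corner_sin (η + k * (π / 5))
    generalize η + k * (π / 5) = ω at *
    have hS := abs_le.1 (le_refl |sin ω|)
    have hC := abs_le.1 (le_refl |cos ω|)
    have hC1 := mul_le_mul_of_nonneg_left hC.1 hρ0
    have hC2 := mul_le_mul_of_nonneg_left hC.2 hρ0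
  · have e : (1 / 2 - ρ / 2) * cos (π / 4 + ω) + (-1 / 2 - ρ / 2) * sin (π / 4 + ω)
        = cos (π / 4) * (-sin ω - ρ * cos ω) := by
      linear_combination -ρ / 2 * hcc - 1 / 2 * hcs
    rw [e, abs_mul, abs_of_nonneg hc]
    refine mul_le_mul_of_nonneg_left (abs_le.2 ⟨?_, ?_⟩) hc <;> linarith
  · have e : (-1 / 2 - ρ / 2) * cos (π / 4 + ω) + (1 / 2 - ρ / 2) * sin (π / 4 + ω)
        = cos (π / 4) * (sin ω - ρ * cos ω) := by
      linear_combination -ρ / 2 * hcc + 1 / 2 * hcs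
    rw [e, abs_mul, abs_of_nonneg hc]
    refine mul_le_mul_of_nonneg_left (abs_le.2 ⟨?_, ?_⟩) hc <;> linarith

/-- Every translate of `decagon ψ r` meets `ℤ²`; since the decagon is centrally symmetric, this
says that its lattice translates cover the plane. -/
def DecagonCovers (r ψ : ℝ) : Prop :=
  ∀ x y : ℝ, ∃ m n : ℤ, ((m : ℝ) - x, (n : ℝ) - y) ∈ decagon ψ r

lemma DecagonCovers.add_int_mul {r ψ : ℝ} (h : DecagonCovers r ψ) (j : ℤ) :
    DecagonCovers r (ψ + j * (π / 5)) := by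
  intro x y
  obtain ⟨m, n, H⟩ := h x y
  refine ⟨m, n, fun k => ?_⟩
  have := H (j + k)
  have e : ψ + j * (π / 5) + k * (π / 5) = ψ + ((j + k : ℤ) : ℝ) * (π / 5) := by
    push_cast; ring
  rw [e]; exact this

lemma DecagonCovers.swap {r ψ : ℝ} (h : DecagonCovers r ψ) : DecagonCovers r (π / 2 - ψ) := by
  intro x y
  obtain ⟨m, n, H⟩ := h y x
  exact ⟨n, m, decagon_swap H⟩

lemma DecagonCovers.neg {r ψ : ℝ} (h : DecagonCovers r ψ) : DecagonCovers r (-ψ) := by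
  intro x y
  obtain ⟨m, n, H⟩ := h x (-y)
  refine ⟨m, -n, fun k => ?_⟩
  have := H (-k)
  have e : -ψ + k * (π / 5) = -(ψ + ((-k : ℤ) : ℝ) * (π / 5)) := by
    push_cast; ring
  rw [e, cos_neg, sin_neg]
  convert this using 2
  push_cast
  ring

lemma DecagonCovers.add_tenth {r ψ : ℝ} (h : DecagonCovers r ψ) (j : ℤ) :
    DecagonCovers r (ψ + j * (π / 10)) := by
  rcases Int.even_or_odd' j with ⟨i, rfl | rfl⟩
  · convert h.add_int_mul i using 1
    push_cast; ring
  · convert (h.neg.swap).add_int_mul (i - 2) using 1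
    push_cast; ring

/-- The rotations by `π/5` (of the decagon) and `π/2` (of the lattice) and the common reflections
reduce every direction to `π/4 + η` with `0 ≤ η ≤ π/20`. -/
lemma decagon_covers (ψ : ℝ) : DecagonCovers (cos (π / 4) * cos (π / 20)) ψ := by
  have hπ : 0 < π / 10 := by linarith [pi_pos]
  set j := ⌊(ψ - π / 4) / (π / 10)⌋ with hj
  have h1 : (j : ℝ) * (π / 10) ≤ ψ - π / 4 := (le_div_iff₀ hπ).1 (Int.floor_le _)
  have h2 : ψ - π / 4 < (j + 1 : ℝ) * (π / 10) := (div_lt_iff₀ hπ).1 (Int.lt_floor_add_one _)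
  clear_value j
  rcases le_total (ψ - π / 4 - j * (π / 10)) (π / 20) with h | h
  · have := DecagonCovers.add_tenth (cover_base (η := ψ - π / 4 - j * (π / 10)) (by linarith) h) j
    convert this using 1
    ring
  · have := DecagonCovers.add_tenth (DecagonCovers.swap
      (cover_base (η := π / 10 - (ψ - π / 4 - j * (π / 10))) (by linarith) (by linarith))) (j + 1)
    convert this using 1
    push_cast; ring

/-! ### The 10-gon as an intersection of half-planes -/

@[simp] lemma v2_zero (a b : ℝ) : v2 a b 0 = a := rfl
@[simp] lemma v2_one (a b : ℝ) : v2 a b 1 = b := rfl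

lemma inner_eq (x y : E2) : inner ℝ x y = x 0 * y 0 + x 1 * y 1 := by
  simp [PiLp.inner_apply, Fin.sum_univ_two, mul_comm]

lemma vertex_mem (k : ℤ) : v2 (cos (k * (π / 5))) (sin (k * (π / 5))) ∈ Hgon 10 := by
  apply subset_convexHull
  have h0 := Int.emod_nonneg k (show (10 : ℤ) ≠ 0 by norm_num)
  refine ⟨(k % 10).toNat, by omega, ?_⟩
  have e : (k : ℝ) * (π / 5)
      = 2 * ((k % 10).toNat : ℝ) * π / (10 : ℕ) + ((k / 10 : ℤ) : ℝ) * (2 * π) := by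
    have h1 : ((k % 10).toNat : ℝ) = ((k % 10 : ℤ) : ℝ) := by
      exact_mod_cast Int.toNat_of_nonneg h0
    have h2 : (k : ℝ) = 10 * ((k / 10 : ℤ) : ℝ) + ((k % 10 : ℤ) : ℝ) := by
      exact_mod_cast (Int.mul_ediv_add_emod k 10).symm
    rw [h1, h2]; push_cast; ring
  rw [e, cos_add_int_mul_two_pi, sin_add_int_mul_two_pi]

lemma zero_mem_Hgon : (0 : E2) ∈ Hgon 10 := by
  have hconv : Convex ℝ (Hgon 10) := convex_convexHull ℝ _
  have h := hconv (vertex_mem 0) (vertex_mem 5)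
    (by norm_num : (0 : ℝ) ≤ 1 / 2) (by norm_num : (0 : ℝ) ≤ 1 / 2) (by norm_num)
  have e : ((5 : ℤ) : ℝ) * (π / 5) = π := by push_cast; ring
  rw [e] at h
  have e' : (0 : E2) = (1 / 2 : ℝ) • v2 (cos ((0 : ℤ) * (π / 5))) (sin ((0 : ℤ) * (π / 5)))
      + (1 / 2 : ℝ) • v2 (cos π) (sin π) := by
    ext i
    fin_cases i <;> simp
  rwa [e']

lemma exists_polar (x y : ℝ) : ∃ r φ : ℝ, 0 ≤ r ∧ x = r * cos φ ∧ y = r * sin φ :=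
  ⟨‖(⟨x, y⟩ : ℂ)‖, Complex.arg ⟨x, y⟩, norm_nonneg _,
    by rw [Complex.norm_mul_cos_arg], by rw [Complex.norm_mul_sin_arg]⟩

lemma cos_tenth_pos : 0 < cos (π / 10) :=
  cos_pos_of_mem_Ioo ⟨by linarith [pi_pos], by linarith [pi_pos]⟩

/-- A point in the sector between two consecutive vertices is a nonnegative combination of them, and
the inequality for the edge joining them says that the coefficients sum to at most `t`. -/
lemma mem_smul_Hgon {t : ℝ} (ht : 0 < t) (p : E2)
    (hp : ∀ k : ℤ, p 0 * cos (π / 10 + k * (π / 5)) + p 1 * sin (π / 10 + k * (π / 5))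
      ≤ t * cos (π / 10)) : p ∈ t • Hgon 10 := by
  have hπ : 0 < π / 5 := by linarith [pi_pos]
  obtain ⟨r, φ, hr, h0, h1⟩ := exists_polar (p 0) (p 1)
  set k := ⌊φ / (π / 5)⌋ with hk
  have h2 : (k : ℝ) * (π / 5) ≤ φ := (le_div_iff₀ hπ).1 (Int.floor_le _)
  have h3 : φ < (k + 1 : ℝ) * (π / 5) := (div_lt_iff₀ hπ).1 (Int.lt_floor_add_one _)
  clear_value k
  obtain ⟨ω, rfl⟩ : ∃ ω, φ = ω + k * (π / 5) := ⟨φ - k * (π / 5), by ring⟩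
  have hω0 : 0 ≤ ω := by linarith
  have hω1 : ω ≤ π / 5 := by linarith
  have hs : 0 < sin (π / 5) := sin_pos_of_pos_of_lt_pi hπ (by linarith)
  have hs0 : 0 ≤ sin ω := sin_nonneg_of_nonneg_of_le_pi hω0 (by linarith)
  have hs1 : 0 ≤ sin (π / 5 - ω) := sin_nonneg_of_nonneg_of_le_pi (by linarith) (by linarith)
  have hs18 : 0 < sin (π / 10) := sin_pos_of_pos_of_lt_pi (by linarith) (by linarith)
  have hsum : sin ω + sin (π / 5 - ω) = 2 * sin (π / 10) * cos (ω - π / 10) := by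
    rw [sin_add_sin]; congr 3 <;> ring
  have hdbl : sin (π / 5) = 2 * sin (π / 10) * cos (π / 10) := by
    rw [← sin_two_mul]; congr 1; ring
  have hb : r * (sin ω + sin (π / 5 - ω)) ≤ t * sin (π / 5) := by
    have := hp k
    have e : p 0 * cos (π / 10 + k * (π / 5)) + p 1 * sin (π / 10 + k * (π / 5))
        = r * cos (ω - π / 10) := by
      have : ω - π / 10 = (ω + k * (π / 5)) - (π / 10 + k * (π / 5)) := by ring
      rw [h0, h1, this, cos_sub]; ring
    rw [e] at this
    rw [hsum, hdbl]
    nlinarith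
  rw [mem_smul_set_iff_inv_smul_mem₀ ht.ne']
  have hconv : Convex ℝ (Hgon 10) := convex_convexHull ℝ _
  set α := r * sin (π / 5 - ω) / (t * sin (π / 5)) with hα
  set β := r * sin ω / (t * sin (π / 5)) with hβ
  have hα0 : 0 ≤ α := by positivity
  have hβ0 : 0 ≤ β := by positivity
  have hαβ : α + β ≤ 1 := by
    rw [hα, hβ, ← add_div, div_le_one (by positivity)]; linarith
  have hm := hconv.sum_mem (t := Finset.univ) (w := ![α, β, 1 - α - β])
    (z := ![v2 (cos (k * (π / 5))) (sin (k * (π / 5))),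
      v2 (cos ((k + 1 : ℤ) * (π / 5))) (sin ((k + 1 : ℤ) * (π / 5))), 0])
    (by intro i _; fin_cases i <;> simp <;> linarith)
    (by simp [Fin.sum_univ_three])
    (by intro i _; fin_cases i
        · exact vertex_mem k
        · exact vertex_mem (k + 1)
        · exact zero_mem_Hgon)
  convert hm using 1
  have e1 : ((k + 1 : ℤ) : ℝ) * (π / 5) = k * (π / 5) + π / 5 := by push_cast; ring
  have hα' : α * t * sin (π / 5) = r * sin (π / 5 - ω) := by rw [hα]; field_simp
  have hβ' : β * t * sin (π / 5) = r * sin ω := by rw [hβ]; field_simp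
  clear_value α β
  rw [sin_sub] at hα'
  have key : ∀ u v : ℝ, t * sin (π / 5) * (u - v) = 0 → u = v := by
    intro u v h
    rcases mul_eq_zero.1 h with h | h
    · exact absurd h (by positivity)
    · linarith
  have hti : t * t⁻¹ = 1 := mul_inv_cancel₀ ht.ne'
  ext i
  fin_cases i
  · simp only [Fin.sum_univ_three, Fin.zero_eta, PiLp.smul_apply, PiLp.add_apply, smul_eq_mul,
      Matrix.cons_val_zero, Matrix.cons_val_one, Matrix.cons_val, v2_zero, smul_zero,
      add_zero, h0, e1]
    apply key
    rw [cos_add, cos_add]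
    linear_combination
      sin (π / 5) * r * (cos ω * cos (k * (π / 5)) - sin ω * sin (k * (π / 5))) * hti
      - cos (k * (π / 5)) * hα'
      - (cos (k * (π / 5)) * cos (π / 5) - sin (k * (π / 5)) * sin (π / 5)) * hβ'
  · simp only [Fin.sum_univ_three, Fin.mk_one, PiLp.smul_apply, PiLp.add_apply, smul_eq_mul,
      Matrix.cons_val_zero, Matrix.cons_val_one, Matrix.cons_val, v2_one, smul_zero,
      add_zero, h1, e1]
    apply key
    rw [sin_add, sin_add]
    linear_combination
      sin (π / 5) * r * (sin ω * cos (k * (π / 5)) + cos ω * sin (k * (π / 5))) * hti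
      - sin (k * (π / 5)) * hα'
      - (sin (k * (π / 5)) * cos (π / 5) + cos (k * (π / 5)) * sin (π / 5)) * hβ'

lemma Hgon_bound {t : ℝ} (ht : 0 < t) {p : E2} (hp : p ∈ t • Hgon 10) (k : ℤ) :
    p 0 * cos (π / 10 + k * (π / 5)) + p 1 * sin (π / 10 + k * (π / 5)) ≤ t * cos (π / 10) := by
  obtain ⟨q, hq, rfl⟩ := hp
  have hc : Convex ℝ {q : E2 | inner ℝ (v2 (cos (π / 10 + k * (π / 5)))
      (sin (π / 10 + k * (π / 5)))) q ≤ cos (π / 10)} :=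
    convex_halfSpace_le (innerₛₗ ℝ _).isLinear _
  have h := convexHull_min ?_ hc hq
  · simp only [mem_ofPred_eq, inner_eq, v2_zero, v2_one] at h
    have := mul_le_mul_of_nonneg_left h ht.le
    simp only [PiLp.smul_apply, smul_eq_mul]
    linarith
  · rintro _ ⟨n, -, rfl⟩
    simp only [mem_ofPred_eq, inner_eq, v2_zero, v2_one]
    rw [← cos_sub]
    have e : π / 10 + k * (π / 5) - 2 * n * π / (10 : ℕ)
        = π / 10 + ((k - n : ℤ) : ℝ) * (π / 5) := by
      push_cast; ring
    rw [e]
    exact (le_abs_self _).trans (abs_cos_le (by linarith [pi_pos]) le_rfl _)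

/-! ### The threshold and the main implications -/

/-- Since `√2/2 · cos(π/20)` is the largest value of an edge functional of `H₁₀` at `(1/2, 1/2)` and
`cos(π/10)` is the inradius of `H₁₀`, the right-hand side says that `(1/2, 1/2) ∈ t·H₁₀`. -/
lemma threshold_iff (t : ℝ) :
    (cos (π / 5) - sin (π / 5) + sin (2 * π / 5) - cos (2 * π / 5)) / (2 * sin (π / 5)) ≤ t ↔
      cos (π / 4) * cos (π / 20) ≤ t * cos (π / 10) := by
  have hπ := pi_pos
  have hs18 : 0 < sin (π / 10) := sin_pos_of_pos_of_lt_pi (by linarith) (by linarith)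
  have hdbl : sin (π / 5) = 2 * sin (π / 10) * cos (π / 10) := by
    rw [← sin_two_mul]; congr 1; ring
  have hs : 0 < sin (π / 5) := sin_pos_of_pos_of_lt_pi (by linarith) (by linarith)
  have h1 : cos (π / 5) - cos (2 * π / 5) = 2 * sin (π / 10) * sin (3 * π / 10) := by
    have : sin (-(π / 10)) = - sin (π / 10) := sin_neg _
    rw [cos_sub_cos, show (π / 5 - 2 * π / 5) / 2 = -(π / 10) by ring, this,
      show (π / 5 + 2 * π / 5) / 2 = 3 * π / 10 by ring]
    ring
  have h2 : sin (2 * π / 5) - sin (π / 5) = 2 * sin (π / 10) * cos (3 * π / 10) := by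
    rw [sin_sub_sin, show (2 * π / 5 - π / 5) / 2 = π / 10 by ring,
      show (2 * π / 5 + π / 5) / 2 = 3 * π / 10 by ring]
  have h3 : cos (3 * π / 10) + sin (3 * π / 10) = 2 * cos (π / 4) * cos (π / 20) := by
    rw [← corner_cos]; congr 2 <;> ring
  have e : cos (π / 5) - sin (π / 5) + sin (2 * π / 5) - cos (2 * π / 5)
      = 4 * sin (π / 10) * (cos (π / 4) * cos (π / 20)) := by
    linear_combination h1 + h2 + 2 * sin (π / 10) * h3
  rw [div_le_iff₀ (by linarith), e, hdbl,
    show t * (2 * (2 * sin (π / 10) * cos (π / 10))) = 4 * sin (π / 10) * (t * cos (π / 10)) by ring]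
  exact mul_le_mul_iff_right₀ (by linarith)

/-- A linear isometry of the plane is a rotation or a reflection. -/
lemma isometry_angles (Q : E2 ≃ₗᵢ[ℝ] E2) : ∃ φ : ℝ,
    (∀ a, Q (v2 (cos a) (sin a)) = v2 (cos (φ + a)) (sin (φ + a))) ∨
    (∀ a, Q (v2 (cos a) (sin a)) = v2 (cos (φ - a)) (sin (φ - a))) := by
  have hlin : ∀ a, Q (v2 (cos a) (sin a)) = cos a • Q (v2 1 0) + sin a • Q (v2 0 1) := by
    intro a
    rw [← map_smul, ← map_smul, ← map_add]
    congr 1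
    ext i; fin_cases i <;> simp
  have h11 := Q.inner_map_map (v2 1 0) (v2 1 0)
  have h12 := Q.inner_map_map (v2 1 0) (v2 0 1)
  have h22 := Q.inner_map_map (v2 0 1) (v2 0 1)
  simp only [inner_eq, v2_zero, v2_one] at h11 h12 h22
  obtain ⟨r, φ, hr, h0, h1⟩ := exists_polar (Q (v2 1 0) 0) (Q (v2 1 0) 1)
  generalize Q (v2 1 0) = e at *
  generalize Q (v2 0 1) = f at *
  have hsc := sin_sq_add_cos_sq φ
  have hr1 : r = 1 := by
    rw [h0, h1] at h11
    have : r * r * (sin φ ^ 2 + cos φ ^ 2) = 1 := by linarith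
    rw [hsc] at this
    nlinarith
  subst hr1
  rw [one_mul] at h0 h1
  rw [h0, h1] at h12
  have hσ : ∃ σ : ℝ, f 0 = - σ * sin φ ∧ f 1 = σ * cos φ := by
    refine ⟨f 1 * cos φ - f 0 * sin φ, ?_, ?_⟩
    · linear_combination -f 0 * hsc + cos φ * h12
    · linear_combination -f 1 * hsc + sin φ * h12
  obtain ⟨σ, hf0, hf1⟩ := hσ
  have hσ2 : σ ^ 2 = 1 := by
    rw [hf0, hf1] at h22
    linear_combination h22 - σ ^ 2 * hsc
  refine ⟨φ, ?_⟩
  rcases mul_self_eq_one_iff.1 ((sq σ).symm.trans hσ2) with rfl | rfl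
  · left
    intro a
    rw [hlin]
    ext i; fin_cases i
    · simp [h0, hf0, cos_add]; ring
    · simp [h1, hf1, sin_add]; ring
  · right
    intro a
    rw [hlin]
    ext i; fin_cases i
    · simp [h0, hf0, cos_sub]; ring
    · simp [h1, hf1, sin_sub]; ring

lemma covers_of_threshold {t : ℝ} (ht : 0 < t)
    (h : cos (π / 4) * cos (π / 20) ≤ t * cos (π / 10)) : CoversAnyPosition (t • Hgon 10) := by
  intro Q x
  obtain ⟨φ, hφ⟩ := isometry_angles Q
  suffices H : ∃ m n : ℤ, ∀ k : ℤ, inner ℝ (v2 m n - x)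
      (Q (v2 (cos (π / 10 + k * (π / 5))) (sin (π / 10 + k * (π / 5))))) ≤ t * cos (π / 10) by
    obtain ⟨m, n, H⟩ := H
    refine ⟨v2 m n, ⟨Q.symm (v2 m n - x), mem_smul_Hgon ht _ fun k => ?_, by simp⟩, ?_⟩
    · have := H k
      rw [← Q.symm.inner_map_map, Q.symm_apply_apply, inner_eq] at this
      simpa using this
    · intro i
      fin_cases i
      · exact ⟨m, rfl⟩
      · exact ⟨n, rfl⟩
  rcases hφ with hφ | hφ
  · obtain ⟨m, n, H⟩ := decagon_covers (φ + π / 10) (x 0) (x 1)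
    refine ⟨m, n, fun k => ?_⟩
    rw [hφ, inner_eq, ← add_assoc]
    exact (le_abs_self _).trans ((H k).trans h)
  · obtain ⟨m, n, H⟩ := decagon_covers (φ - π / 10) (x 0) (x 1)
    refine ⟨m, n, fun k => ?_⟩
    have := H (-k)
    have e : φ - (π / 10 + k * (π / 5)) = φ - π / 10 + ((-k : ℤ) : ℝ) * (π / 5) := by
      push_cast; ring
    rw [hφ, inner_eq, e]
    exact (le_abs_self _).trans (this.trans h)

/-- By the symmetry of the 10-gon in both axes, the edge functional with normal `3π/10` bounds
`|p 0| cos(3π/10) + |p 1| sin(3π/10)`. -/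
lemma threshold_of_mem {t : ℝ} (ht : 0 < t) {p : E2} (hp : p ∈ t • Hgon 10)
    (h0 : 1 / 2 ≤ |p 0|) (h1 : 1 / 2 ≤ |p 1|) :
    cos (π / 4) * cos (π / 20) ≤ t * cos (π / 10) := by
  have hπ := pi_pos
  have hC : 0 ≤ cos (3 * π / 10) := cos_nonneg_of_mem_Icc ⟨by linarith, by linarith⟩
  have hS : 0 ≤ sin (3 * π / 10) := sin_nonneg_of_nonneg_of_le_pi (by linarith) (by linarith)
  have h3 : cos (3 * π / 10) + sin (3 * π / 10) = 2 * cos (π / 4) * cos (π / 20) := by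
    rw [← corner_cos]; congr 2 <;> ring
  have b1 := Hgon_bound ht hp 1
  have b3 := Hgon_bound ht hp 3
  have b6 := Hgon_bound ht hp 6
  have b8 := Hgon_bound ht hp 8
  rw [show π / 10 + ((1 : ℤ) : ℝ) * (π / 5) = 3 * π / 10 by push_cast; ring] at b1
  rw [show π / 10 + ((3 : ℤ) : ℝ) * (π / 5) = π - 3 * π / 10 by push_cast; ring,
    cos_pi_sub, sin_pi_sub] at b3
  rw [show π / 10 + ((6 : ℤ) : ℝ) * (π / 5) = 3 * π / 10 + π by push_cast; ring,
    cos_add_pi, sin_add_pi] at b6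
  rw [show π / 10 + ((8 : ℤ) : ℝ) * (π / 5) = 2 * π - 3 * π / 10 by push_cast; ring,
    cos_two_pi_sub, sin_two_pi_sub] at b8
  have hb : |p 0| * cos (3 * π / 10) + |p 1| * sin (3 * π / 10) ≤ t * cos (π / 10) := by
    rcases abs_cases (p 0) with ⟨e, -⟩ | ⟨e, -⟩ <;> rcases abs_cases (p 1) with ⟨e', -⟩ | ⟨e', -⟩ <;>
      rw [e, e'] <;> linarith
  have := mul_le_mul_of_nonneg_right h0 hC
  have := mul_le_mul_of_nonneg_right h1 hS
  linarith

lemma half_le_abs_sub_half (m : ℤ) : (1 / 2 : ℝ) ≤ |(m : ℝ) - 1 / 2| := by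
  rcases le_or_gt m 0 with h | h
  · have : (m : ℝ) ≤ 0 := by exact_mod_cast h
    rw [abs_of_nonpos (by linarith)]; linarith
  · have : (1 : ℝ) ≤ m := by exact_mod_cast h
    rw [abs_of_nonneg (by linarith)]; linarith

lemma square_subset {t : ℝ} (ht : 0 < t)
    (h : cos (π / 4) * cos (π / 20) ≤ t * cos (π / 10)) :
    {x : E2 | x 0 ∈ Icc (-(1/2) : ℝ) (1/2) ∧ x 1 ∈ Icc (-(1/2) : ℝ) (1/2)} ⊆ t • Hgon 10 := by
  rintro x ⟨hx0, hx1⟩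
  have hπ := pi_pos
  refine mem_smul_Hgon ht x fun k => le_trans ?_ h
  have hc : 0 ≤ cos (π / 4) := cos_nonneg_of_mem_Icc ⟨by linarith, by linarith⟩
  have hC := abs_cos_le (η := π / 20) (by linarith) (by linarith) (k - 1)
  have hS := abs_sin_add_le (η := π / 20) (ρ := 0) (by linarith) le_rfl (by ring) (k - 1)
  rw [zero_mul, add_zero] at hS
  have e : π / 10 + k * (π / 5) = π / 4 + (π / 20 + ((k - 1 : ℤ) : ℝ) * (π / 5)) := by
    push_cast; ring
  rw [e]
  have hcc := corner_cos (π / 20 + ((k - 1 : ℤ) : ℝ) * (π / 5))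
  have hcs := corner_sin (π / 20 + ((k - 1 : ℤ) : ℝ) * (π / 5))
  generalize π / 20 + ((k - 1 : ℤ) : ℝ) * (π / 5) = ω at *
  have hC' := abs_le.1 hC
  have hS' := abs_le.1 hS
  have i1 := mul_le_mul_of_nonneg_left hC'.1 hc
  have i2 := mul_le_mul_of_nonneg_left hC'.2 hc
  have i3 := mul_le_mul_of_nonneg_left hS'.1 hc
  have i4 := mul_le_mul_of_nonneg_left hS'.2 hc
  generalize cos (π / 4 + ω) = C at *
  generalize sin (π / 4 + ω) = S at *
  obtain ⟨l0, u0⟩ := hx0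
  obtain ⟨l1, u1⟩ := hx1
  -- A linear functional on the square is at most its value at one of the four corners.
  have hx : x 0 * C ≤ C / 2 ∨ x 0 * C ≤ -C / 2 := by
    rcases le_total 0 C with c | c
    · left; nlinarith
    · right; nlinarith
  have hy : x 1 * S ≤ S / 2 ∨ x 1 * S ≤ -S / 2 := by
    rcases le_total 0 S with c | c
    · left; nlinarith
    · right; nlinarith
  rcases hx with hx | hx <;> rcases hy with hy | hy <;> linarith

/-! ### The equivalence -/

/-- For the regular `10`-gon, the following are equivalent: `t·H₁₀` contains a lattice
point of `ℤ²` in any position; `t·H₁₀` contains the square `[-1/2,1/2]²`;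
`t ≥ (cos(π/5) − sin(π/5) + sin(2π/5) − cos(2π/5))/(2·sin(π/5))`. -/
theorem regular10Gon_covering (t : ℝ) (ht : 0 < t) :
    List.TFAE
      [ CoversAnyPosition (t • Hgon 10),
        {x : E2 | x 0 ∈ Icc (-(1/2) : ℝ) (1/2) ∧ x 1 ∈ Icc (-(1/2) : ℝ) (1/2)}
          ⊆ t • Hgon 10,
        (cos (π / 5) - sin (π / 5) + sin (2 * π / 5) - cos (2 * π / 5)) /
            (2 * sin (π / 5)) ≤ t ] := by
  rw [threshold_iff]
  tfae_have 3 → 1 := covers_of_threshold ht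
  tfae_have 3 → 2 := square_subset ht
  tfae_have 2 → 3 := by
    intro h
    have hp : v2 (1 / 2) (1 / 2) ∈ t • Hgon 10 := h (by simp)
    refine threshold_of_mem ht hp ?_ ?_ <;> simp [abs_of_pos]
  tfae_have 1 → 3 := by
    intro h
    obtain ⟨_, ⟨y, hy, rfl⟩, hz⟩ := h (LinearIsometryEquiv.refl ℝ E2) (v2 (1 / 2) (1 / 2))
    obtain ⟨m, hm⟩ := hz 0
    obtain ⟨n, hn⟩ := hz 1
    simp only [LinearIsometryEquiv.coe_refl, id_eq, PiLp.add_apply, v2_zero, v2_one] at hm hn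
    refine threshold_of_mem ht hy ?_ ?_
    · rw [eq_sub_of_add_eq hm]; exact half_le_abs_sub_half m
    · rw [eq_sub_of_add_eq hn]; exact half_le_abs_sub_half n
  tfae_finish
end
end

section
/- Define s(θ) = (sin(π/3)·cos θ)/(sin(π/3) − 2·sin²(θ + π/6) + 2·cos θ·sin(θ + π/6)). Then for every real θ with 0 ≤ θ ≤ arcsin(3^{1/4}/2) − π/6, one has s(θ) ≥ s(0) = √3/(√3 + 1); moreover s is monotonically increasing on this interval. -/
/-!
The addition formula for `sin (θ + π/6)` turns `s θ` into `√3 c / (4 c² - (3 - √3))` with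
`c = cos θ` (`s_eq_cos`). As `3 - √3 > 0`, this is a decreasing function of `c` wherever
`c > 0` and the denominator is positive. On the interval in question `θ ≤ π/6`
(`endpoint_le_pi_div_six`), so `c ≥ √3/2`, the denominator is at least `√3`, and `cos` decreases;
hence `s` increases.
-/

open Real Set

noncomputable def s (θ : ℝ) : ℝ :=
  sin (π / 3) * cos θ /
    (sin (π / 3) - 2 * sin (θ + π / 6) ^ 2 + 2 * cos θ * sin (θ + π / 6))

lemma s_eq_cos (θ : ℝ) : s θ = √3 * cos θ / (-3 + √3 + 4 * cos θ ^ 2) := by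
  have h3 : √3 ^ 2 = (3 : ℝ) := Real.sq_sqrt (by norm_num)
  have hden : sin (π / 3) - 2 * sin (θ + π / 6) ^ 2 + 2 * cos θ * sin (θ + π / 6)
      = (-3 + √3 + 4 * cos θ ^ 2) / 2 := by
    rw [sin_add, sin_pi_div_three, sin_pi_div_six, cos_pi_div_six]
    linear_combination (-(sin θ ^ 2) / 2) * h3 - (3 / 2) * sin_sq_add_cos_sq θ
  rw [s, hden, sin_pi_div_three, div_mul_eq_mul_div, div_div_div_cancel_right₀ (by norm_num)]

/-- A crude bound, from `3^{1/4} ≤ √3`; it suffices for positivity of the denominator of `s`. -/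
lemma endpoint_le_pi_div_six : arcsin ((3 : ℝ) ^ ((1 : ℝ) / 4) / 2) - π / 6 ≤ π / 6 := by
  have hroot : (3 : ℝ) ^ ((1 : ℝ) / 4) ≤ √3 := by
    rw [Real.sqrt_eq_rpow]
    exact Real.rpow_le_rpow_of_exponent_le (by norm_num) (by norm_num)
  have harcsin : arcsin ((3 : ℝ) ^ ((1 : ℝ) / 4) / 2) ≤ π / 3 := by
    rw [arcsin_le_iff_le_sin' ⟨by linarith [pi_pos], by linarith [pi_pos]⟩, sin_pi_div_three]
    linarith
  linarith

lemma s_monotoneOn : MonotoneOn s (Icc (0 : ℝ) (π / 6)) := by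
  intro a ha b hb hab
  have h3 : √3 ^ 2 = (3 : ℝ) := Real.sq_sqrt (by norm_num)
  have h3pos : 0 < √3 := Real.sqrt_pos.mpr (by norm_num)
  have hk : 0 ≤ 3 - √3 := by nlinarith
  have hcos : cos b ≤ cos a :=
    cos_le_cos_of_nonneg_of_le_pi ha.1 (by linarith [hb.2, pi_pos]) hab
  have hcb : √3 / 2 ≤ cos b := by
    rw [← cos_pi_div_six]
    exact cos_le_cos_of_nonneg_of_le_pi hb.1 (by linarith [pi_pos]) hb.2
  have hb0 : 0 < cos b := by linarith
  have ha0 : 0 < cos a := by linarith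
  have hdb : 0 < -3 + √3 + 4 * cos b ^ 2 := by nlinarith
  have hda : 0 < -3 + √3 + 4 * cos a ^ 2 := by nlinarith
  rw [s_eq_cos, s_eq_cos, div_le_div_iff₀ hda hdb]
  -- The cross-multiplied difference is `√3 (cos a - cos b) (4 cos a cos b + 3 - √3)`.
  have hdiff : 0 ≤ √3 * ((cos a - cos b) * (4 * (cos a * cos b) + (3 - √3))) :=
    mul_nonneg h3pos.le (mul_nonneg (by linarith) (by positivity))
  linarith

/-- On `[0, arcsin(3^{1/4}/2) − π/6]` the function `s` is monotonically increasing,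
`s(0) = √3/(√3+1)`, and `s(θ) ≥ s(0)` throughout. -/
theorem s_ge_s_zero :
    s 0 = Real.sqrt 3 / (Real.sqrt 3 + 1) ∧
    (∀ θ ∈ Icc (0 : ℝ) (arcsin ((3 : ℝ) ^ ((1 : ℝ) / 4) / 2) - π / 6), s 0 ≤ s θ) ∧
    MonotoneOn s (Icc (0 : ℝ) (arcsin ((3 : ℝ) ^ ((1 : ℝ) / 4) / 2) - π / 6)) := by
  have hmono : MonotoneOn s (Icc (0 : ℝ) (arcsin ((3 : ℝ) ^ ((1 : ℝ) / 4) / 2) - π / 6)) :=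
    s_monotoneOn.mono (Icc_subset_Icc_right endpoint_le_pi_div_six)
  refine ⟨?_, fun θ hθ => hmono ⟨le_rfl, hθ.1.trans hθ.2⟩ hθ hθ.1, hmono⟩
  rw [s_eq_cos, cos_zero]
  ring_nf
end

section
/- Define t(θ) = (2√3·sin(θ + π/6) + √3·cos(θ + π/3))/(4·cos θ·sin(θ + π/6) + √3). Then for every real θ with arcsin(3^{1/4}/2) − π/6 ≤ θ ≤ π/6, one has t(θ) ≥ t(π/6) = √3/(√3 + 1); moreover t is monotonically decreasing on this interval. -/
/-!
With `s = sin (θ + π / 3)` one has `t θ = 3 s / (4 s² + √3 - 1)` (`t_eq`). On the interval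
`θ + π / 3` lies in `[π / 6, π / 2]` because `arcsin` of a nonnegative number is nonnegative, so
`s` is increasing in `θ` and `s ≥ 1 / 2`. For `x ≤ y` the cross difference
`x (4 y² + k) - y (4 x² + k)` equals `(y - x) (4 x y - k)`, which is nonnegative for
`x, y ≥ 1 / 2` and `k = √3 - 1 ≤ 1`; hence `t` is decreasing. The bound by `t (π / 6)` is
the special case of the right endpoint.
-/

open Real Set

noncomputable def t (θ : ℝ) : ℝ :=
  (2 * Real.sqrt 3 * sin (θ + π / 6) + Real.sqrt 3 * cos (θ + π / 3)) /
    (4 * cos θ * sin (θ + π / 6) + Real.sqrt 3)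

lemma t_eq (θ : ℝ) :
    t θ = 3 * sin (θ + π / 3) / (4 * sin (θ + π / 3) ^ 2 + (√3 - 1)) := by
  have h3 : √3 ^ 2 = 3 := Real.sq_sqrt (by norm_num)
  have hsc := sin_sq_add_cos_sq θ
  unfold t
  rw [sin_add, sin_add, cos_add, sin_pi_div_six, cos_pi_div_six, sin_pi_div_three,
    cos_pi_div_three]
  congr 1
  · linear_combination (sin θ / 2) * h3
  · linear_combination -hsc - cos θ ^ 2 * h3

lemma t_pi_div_six : t (π / 6) = √3 / (√3 + 1) := by
  have h3 : √3 ^ 2 = 3 := Real.sq_sqrt (by norm_num)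
  have hp : 0 < √3 := by positivity
  rw [t_eq, show π / 6 + π / 3 = π / 2 by ring, sin_pi_div_two,
    div_eq_div_iff (by linarith) (by linarith)]
  linear_combination -h3

/-- The interval `[-π / 6, π / 6]` is larger than the one of the theorem; `sin (θ + π / 3)`
is increasing and at least `1 / 2` on it. -/
lemma antitoneOn_t : AntitoneOn t (Icc (-(π / 6)) (π / 6)) := by
  intro a ha b hb hab
  have h3 : √3 ^ 2 = 3 := Real.sq_sqrt (by norm_num)
  have h1 : 1 < √3 := by rw [Real.lt_sqrt] <;> norm_num
  have h2 : √3 < 2 := by rw [Real.sqrt_lt'] <;> norm_num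
  have hpi := pi_pos
  obtain ⟨ha1, ha2⟩ := ha
  obtain ⟨hb1, hb2⟩ := hb
  have hx : 1 / 2 ≤ sin (a + π / 3) := by
    rw [← sin_pi_div_six]
    exact sin_le_sin_of_le_of_le_pi_div_two (by linarith) (by linarith) (by linarith)
  have hxy : sin (a + π / 3) ≤ sin (b + π / 3) :=
    sin_le_sin_of_le_of_le_pi_div_two (by linarith) (by linarith) (by linarith)
  rw [t_eq, t_eq]
  generalize sin (a + π / 3) = x at *
  generalize sin (b + π / 3) = y at *
  rw [div_le_div_iff₀ (by nlinarith) (by nlinarith)]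
  have hk : 0 ≤ 4 * x * y - (√3 - 1) := by nlinarith
  linarith [mul_nonneg (sub_nonneg.2 hxy) hk]

/-- On `[arcsin(3^{1/4}/2) − π/6, π/6]` the function `t` is monotonically decreasing,
`t(π/6) = √3/(√3+1)`, and `t(θ) ≥ t(π/6)` throughout. -/
theorem t_ge_t_pi_div_six :
    t (π / 6) = Real.sqrt 3 / (Real.sqrt 3 + 1) ∧
    (∀ θ ∈ Icc (arcsin ((3 : ℝ) ^ ((1 : ℝ) / 4) / 2) - π / 6) (π / 6),
      t (π / 6) ≤ t θ) ∧
    AntitoneOn t (Icc (arcsin ((3 : ℝ) ^ ((1 : ℝ) / 4) / 2) - π / 6) (π / 6)) := by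
  have h0 : 0 ≤ arcsin ((3 : ℝ) ^ ((1 : ℝ) / 4) / 2) := arcsin_nonneg.2 (by positivity)
  have hanti := antitoneOn_t.mono
    (Icc_subset_Icc_left (b := π / 6) (by linarith :
      -(π / 6) ≤ arcsin ((3 : ℝ) ^ ((1 : ℝ) / 4) / 2) - π / 6))
  exact ⟨t_pi_div_six,
    fun θ hθ => hanti hθ (right_mem_Icc.2 (hθ.1.trans hθ.2)) hθ.2, hanti⟩
end

section
/- For every real θ with 0 ≤ θ ≤ π/20, one has cos(θ − π/5) > sin(π/10)·sin(π/5)/sin(π/10 + θ). -/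
open Real

/-- For `0 ≤ θ ≤ π/20`, `cos(θ − π/5) > sin(π/10)·sin(π/5)/sin(π/10 + θ)`. -/
theorem cos_sub_pi_div_five_gt (θ : ℝ) (h0 : 0 ≤ θ) (h1 : θ ≤ π / 20) :
    cos (θ - π / 5) > sin (π / 10) * sin (π / 5) / sin (π / 10 + θ) := by
  have hpi := pi_pos
  have hpos : 0 < sin (π / 10) := sin_pos_of_pos_of_lt_pi (by linarith) (by linarith)
  have hsin : sin (π / 10) ≤ sin (π / 10 + θ) :=
    sin_le_sin_of_le_of_le_pi_div_two (by linarith) (by linarith) (by linarith)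
  -- `sin (π / 5) = cos (3π / 10)`, and `0 ≤ π / 5 - θ < 3π / 10`.
  have hcos : sin (π / 5) < cos (θ - π / 5) := by
    rw [← cos_pi_div_two_sub, ← cos_neg (θ - π / 5)]
    exact cos_lt_cos_of_nonneg_of_le_pi (by linarith) (by linarith) (by linarith)
  have hs5 : 0 < sin (π / 5) := sin_pos_of_pos_of_lt_pi (by linarith) (by linarith)
  rw [gt_iff_lt, div_lt_iff₀ (hpos.trans_le hsin), mul_comm]
  exact mul_lt_mul hcos hsin hpos (hs5.trans hcos).le
end

section
/- For every real θ with 0 ≤ θ ≤ π/20, one has cos(θ + π/5) > sin(π/5)·sin(3π/10)/sin(3π/10 − θ). -/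
open Real

/-- For `0 ≤ θ ≤ π/20`, `cos(θ + π/5) > sin(π/5)·sin(3π/10)/sin(3π/10 − θ)`. -/
theorem cos_add_pi_div_five_gt (θ : ℝ) (h0 : 0 ≤ θ) (h1 : θ ≤ π / 20) :
    cos (θ + π / 5) > sin (π / 5) * sin (3 * π / 10) / sin (3 * π / 10 - θ) := by
  have hpi := pi_pos
  -- With `φ = θ + π/5 ≤ π/4`, complementary angles reduce the claim to
  -- `cos² φ > sin (π/5) cos (π/5) = sin (2π/5) / 2`, where `cos² φ ≥ 1/2 > sin (2π/5) / 2`.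
  have e1 : sin (3 * π / 10 - θ) = cos (θ + π / 5) := by
    rw [← sin_pi_div_two_sub]; congr 1; ring
  have e2 : sin (3 * π / 10) = cos (π / 5) := by
    rw [← sin_pi_div_two_sub]; congr 1; ring
  have hpos : 0 < cos (θ + π / 5) :=
    cos_pos_of_mem_Ioo ⟨by linarith, by linarith⟩
  have hcos_two : 0 ≤ cos (2 * (θ + π / 5)) :=
    cos_nonneg_of_mem_Icc ⟨by linarith, by linarith⟩
  rw [cos_two_mul] at hcos_two
  have hsin : sin (2 * (π / 5)) < 1 := by
    rw [← sin_pi_div_two]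
    exact sin_lt_sin_of_lt_of_le_pi_div_two (by linarith) le_rfl (by linarith)
  rw [sin_two_mul] at hsin
  rw [e1, e2, gt_iff_lt, div_lt_iff₀ hpos]
  nlinarith
end

section
/- For every real θ with 0 ≤ θ ≤ π/20, one has cos(θ − 2π/5) < sin(3π/10)·sin(2π/5)/sin(3π/10 + θ). -/
/-!
After clearing the positive denominator, the left side is `cos (2π/5 - θ) * sin (3π/10 + θ)`. Both
factors increase with `θ`, so the product is at most its value at `θ = π/20`, namely
`cos (7π/20) * sin (7π/20) = sin (7π/10) / 2 = sin (3π/10) / 2`. This is below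
`sin (3π/10) * sin (2π/5)` because `sin (2π/5) > sin (π/6) = 1/2`.
-/

open Real

/-- For `0 ≤ θ ≤ π/20`, `cos(θ − 2π/5) < sin(3π/10)·sin(2π/5)/sin(3π/10 + θ)`. -/
theorem cos_sub_two_pi_div_five_lt (θ : ℝ) (h0 : 0 ≤ θ) (h1 : θ ≤ π / 20) :
    cos (θ - 2 * π / 5) < sin (3 * π / 10) * sin (2 * π / 5) / sin (3 * π / 10 + θ) := by
  have hpi := pi_pos
  have hden : 0 < sin (3 * π / 10 + θ) := sin_pos_of_pos_of_lt_pi (by linarith) (by linarith)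
  have hs : 0 < sin (3 * π / 10) := sin_pos_of_pos_of_lt_pi (by linarith) (by linarith)
  have hc : 0 < cos (7 * π / 20) := cos_pos_of_mem_Ioo ⟨by linarith, by linarith⟩
  have hcos : cos (θ - 2 * π / 5) ≤ cos (7 * π / 20) := by
    rw [← cos_neg (θ - 2 * π / 5)]
    exact cos_le_cos_of_nonneg_of_le_pi (by linarith) (by linarith) (by linarith)
  have hsin : sin (3 * π / 10 + θ) ≤ sin (7 * π / 20) :=
    sin_le_sin_of_le_of_le_pi_div_two (by linarith) (by linarith) (by linarith)
  have hhalf : 1 / 2 < sin (2 * π / 5) := by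
    rw [← sin_pi_div_six]
    exact sin_lt_sin_of_lt_of_le_pi_div_two (by linarith) (by linarith) (by linarith)
  have hdouble : sin (3 * π / 10) = 2 * sin (7 * π / 20) * cos (7 * π / 20) := by
    rw [← sin_two_mul, ← sin_pi_sub]
    congr 1
    ring
  rw [lt_div_iff₀ hden]
  calc cos (θ - 2 * π / 5) * sin (3 * π / 10 + θ)
      ≤ cos (7 * π / 20) * sin (7 * π / 20) := mul_le_mul hcos hsin hden.le hc.le
    _ = sin (3 * π / 10) * (1 / 2) := by rw [hdouble]; ring
    _ < sin (3 * π / 10) * sin (2 * π / 5) := mul_lt_mul_of_pos_left hhalf hs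
end

section
/- Let n ≥ 1 and let α₁, …, αₙ be positive reals. Let E = {x ∈ ℝⁿ : Σᵢ xᵢ²/αᵢ² ≤ 1} be the ellipsoid with semi-axes α₁, …, αₙ. The following are equivalent: (i) E contains a lattice point of ℤⁿ in any position; (ii) Σᵢ 1/αᵢ² ≤ 4; (iii) there exist Q ∈ O(n) and x ∈ ℝⁿ such that Q([0,1]ⁿ) + x ⊆ E, i.e., E contains a cube of edge length 1. -/
/-!
Write `q x = ∑ i, x i ^ 2 / α i ^ 2 = ‖D x‖ ^ 2`, where `D` divides the `i`-th coordinate by `α i`.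
For every orthonormal basis `u` the trace identity `∑ i, q (u i) = ∑ j, 1 / α j ^ 2` holds
(`sum_norm_sq_scaleMap`). It is combined with two greedy arguments in an inner product space.

* `exists_int_norm_sq_le`: real coefficients `x i` can be rounded to integers `z i` with
  `‖∑ (z i - x i) • v i‖ ^ 2 ≤ (1 / 4) * ∑ ‖v i‖ ^ 2`. This derandomizes independent rounding of
  `x i` with mean `x i`, whose variance is at most `1 / 4`. Applied to the images under `D` of the
  rotated coordinate vectors, it yields a lattice point in every position of the ellipsoid.
* `exists_sign_le_norm_sq`: coefficients `|e i| ≤ 1 / 2` can be chosen with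
  `‖c‖ ^ 2 + (1 / 4) * ∑ ‖v i‖ ^ 2 ≤ ‖c + ∑ e i • v i‖ ^ 2`. Applied to a unit cube centred at
  `c`, it produces a point `w` of the cube with `q w ≥ (1 / 4) * ∑ 1 / α i ^ 2`.

Conversely, if `∑ 1 / α i ^ 2 ≤ 4` then the axis-parallel unit cube centred at the origin lies in the
ellipsoid; and the ellipsoid centred at `(1/2, …, 1/2)` contains a lattice point only if
`∑ 1 / α i ^ 2 ≤ 4`, since each coordinate of the difference is at least `1 / 2` in absolute value.
-/

open Set Pointwise

noncomputable section

/-- The lattice `ℤⁿ ⊆ ℝⁿ`. -/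
def latticeZ (n : ℕ) : Set (EuclideanSpace ℝ (Fin n)) :=
  {v | ∀ i, ∃ m : ℤ, v i = (m : ℝ)}

/-- `K ⊆ ℝⁿ` contains a lattice point of `ℤⁿ` in any position. -/
def CoversAnyPositionN (n : ℕ) (K : Set (EuclideanSpace ℝ (Fin n))) : Prop :=
  ∀ (Q : EuclideanSpace ℝ (Fin n) ≃ₗᵢ[ℝ] EuclideanSpace ℝ (Fin n))
    (x : EuclideanSpace ℝ (Fin n)),
    ∃ z ∈ (fun y => Q y + x) '' K, z ∈ latticeZ n

section Greedy

variable {V : Type*} [NormedAddCommGroup V] [InnerProductSpace ℝ V]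

lemma exists_int_step (w v : V) (x : ℝ) :
    ∃ z : ℤ, ‖w + ((z : ℝ) - x) • v‖ ^ 2 ≤ ‖w‖ ^ 2 + 1 / 4 * ‖v‖ ^ 2 := by
  have key : ∀ a : ℝ, ‖w + a • v‖ ^ 2 = ‖w‖ ^ 2 + 2 * a * inner ℝ w v + a ^ 2 * ‖v‖ ^ 2 := by
    intro a
    rw [norm_add_sq_real, inner_smul_right, norm_smul, mul_pow, Real.norm_eq_abs, sq_abs]
    ring
  have h0 := Int.fract_nonneg x
  have h1 := (Int.fract_lt_one x).le
  have hx := Int.floor_add_fract x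
  set t := Int.fract x
  by_contra! hcon
  have hA := hcon ⌊x⌋
  have hB := hcon (⌊x⌋ + 1)
  rw [key] at hA hB
  rw [show ((⌊x⌋ : ℤ) : ℝ) - x = -t by linarith] at hA
  rw [show ((⌊x⌋ + 1 : ℤ) : ℝ) - x = 1 - t by push_cast; linarith] at hB
  set p := inner ℝ w v
  set N := ‖v‖ ^ 2
  have hN : 0 ≤ N := sq_nonneg _
  -- Average the two choices with weights `1 - t` and `t`: the linear terms cancel and the
  -- quadratic term becomes `t * (1 - t) * N ≤ N / 4`.
  have hA' : (0 : ℝ) < -2 * t * p + t ^ 2 * N - 1 / 4 * N := by linarith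
  have hB' : (0 : ℝ) < 2 * (1 - t) * p + (1 - t) ^ 2 * N - 1 / 4 * N := by linarith
  have hq : 0 ≤ (t - 1 / 2) ^ 2 * N := by positivity
  rcases h1.eq_or_lt with h | h
  · rw [h] at hB'
    nlinarith
  · have e1 := mul_pos (sub_pos.2 h) hA'
    have e2 := mul_nonneg h0 hB'.le
    nlinarith

/-- Greedy rounding: fixing the coefficients one at a time, each contributes at most
`‖v i‖ ^ 2 / 4`. -/
lemma exists_int_norm_sq_le {ι : Type*} (s : Finset ι) (v : ι → V) (x : ι → ℝ) :
    ∃ z : ι → ℤ, ‖∑ i ∈ s, ((z i : ℝ) - x i) • v i‖ ^ 2 ≤ 1 / 4 * ∑ i ∈ s, ‖v i‖ ^ 2 := by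
  classical
  induction s using Finset.induction_on with
  | empty => exact ⟨0, by simp⟩
  | insert a s ha ih =>
    obtain ⟨z, hz⟩ := ih
    obtain ⟨m, hm⟩ := exists_int_step (∑ i ∈ s, ((z i : ℝ) - x i) • v i) (v a) (x a)
    refine ⟨Function.update z a m, ?_⟩
    have hs : ∑ i ∈ s, ((Function.update z a m i : ℝ) - x i) • v i
        = ∑ i ∈ s, ((z i : ℝ) - x i) • v i := by
      refine Finset.sum_congr rfl fun i hi => ?_
      rw [Function.update_of_ne (ne_of_mem_of_not_mem hi ha)]
    rw [Finset.sum_insert ha, Finset.sum_insert ha, hs, Function.update_self, add_comm]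
    linarith

/-- The coefficients are `± 1 / 2`, the sign of each chosen so that the cross term with the partial sum
is nonnegative. -/
lemma exists_sign_le_norm_sq {ι : Type*} (s : Finset ι) (c : V) (v : ι → V) :
    ∃ e : ι → ℝ, (∀ i, |e i| ≤ 1 / 2) ∧
      ‖c‖ ^ 2 + 1 / 4 * ∑ i ∈ s, ‖v i‖ ^ 2 ≤ ‖c + ∑ i ∈ s, e i • v i‖ ^ 2 := by
  classical
  induction s using Finset.induction_on with
  | empty => exact ⟨0, by simp, by simp⟩
  | insert a s ha ih =>
    obtain ⟨e, he, hle⟩ := ih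
    set w := c + ∑ i ∈ s, e i • v i
    obtain ⟨m, hm, hmw⟩ : ∃ m : ℝ, |m| ≤ 1 / 2 ∧
        ‖w‖ ^ 2 + 1 / 4 * ‖v a‖ ^ 2 ≤ ‖w + m • v a‖ ^ 2 := by
      have key : ∀ m : ℝ, ‖w + m • v a‖ ^ 2
          = ‖w‖ ^ 2 + 2 * m * inner ℝ w (v a) + m ^ 2 * ‖v a‖ ^ 2 := by
        intro m
        rw [norm_add_sq_real, inner_smul_right, norm_smul, mul_pow, Real.norm_eq_abs, sq_abs]
        ring
      rcases le_total 0 (inner ℝ w (v a)) with h | h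
      · exact ⟨1 / 2, by norm_num, by rw [key]; linarith⟩
      · exact ⟨-(1 / 2), by norm_num, by rw [key]; linarith⟩
    refine ⟨Function.update e a m, fun i => ?_, ?_⟩
    · by_cases h : i = a
      · subst h; simpa using hm
      · simpa [h] using he i
    · have hs : ∑ i ∈ s, Function.update e a m i • v i = ∑ i ∈ s, e i • v i := by
        refine Finset.sum_congr rfl fun i hi => ?_
        rw [Function.update_of_ne (ne_of_mem_of_not_mem hi ha)]
      rw [Finset.sum_insert ha, Finset.sum_insert ha, hs, Function.update_self,
        show c + (m • v a + ∑ i ∈ s, e i • v i) = w + m • v a by simp only [w]; abel]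
      linarith

end Greedy

/-- The diagonal map dividing the `i`-th coordinate by `α i`; for positive `α i` it carries the
ellipsoid with semi-axes `α i` onto the unit ball. -/
def scaleMap {n : ℕ} (α : Fin n → ℝ) :
    EuclideanSpace ℝ (Fin n) →ₗ[ℝ] EuclideanSpace ℝ (Fin n) where
  toFun x := WithLp.toLp 2 fun i => x i / α i
  map_add' x y := by ext i; simp [add_div]
  map_smul' a x := by ext i; simp [mul_div_assoc]

lemma norm_sq_scaleMap {n : ℕ} (α : Fin n → ℝ) (x : EuclideanSpace ℝ (Fin n)) :
    ‖scaleMap α x‖ ^ 2 = ∑ i, x i ^ 2 / α i ^ 2 := by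
  simp [EuclideanSpace.norm_sq_eq, scaleMap, div_pow]

/-- The trace of the quadratic form `‖scaleMap α x‖ ^ 2` does not depend on the orthonormal basis. -/
lemma sum_norm_sq_scaleMap {n : ℕ} (α : Fin n → ℝ)
    (Q : EuclideanSpace ℝ (Fin n) ≃ₗᵢ[ℝ] EuclideanSpace ℝ (Fin n)) :
    ∑ i, ‖scaleMap α (Q (EuclideanSpace.single i 1))‖ ^ 2 = ∑ j, 1 / α j ^ 2 := by
  simp only [norm_sq_scaleMap]
  rw [Finset.sum_comm]
  refine Finset.sum_congr rfl fun j _ => ?_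
  rw [← Finset.sum_div]
  congr 1
  have h := ((EuclideanSpace.basisFun (Fin n) ℝ).map Q).sum_sq_norm_inner_left
    (EuclideanSpace.single j (1 : ℝ))
  simpa [EuclideanSpace.inner_single_left] using h

lemma map_eq_sum_single {n : ℕ}
    (Q : EuclideanSpace ℝ (Fin n) ≃ₗᵢ[ℝ] EuclideanSpace ℝ (Fin n))
    (x : EuclideanSpace ℝ (Fin n)) :
    Q x = ∑ i, x i • Q (EuclideanSpace.single i 1) := by
  have h := (EuclideanSpace.basisFun (Fin n) ℝ).sum_repr x
  conv_lhs => rw [← h]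
  simp

/-- Henk–Tsintsifas: for the ellipsoid `E` with semi-axes `α i`, the following are
equivalent: `E` contains a lattice point of `ℤⁿ` in any position; `∑ i, 1/(α i)² ≤ 4`;
`E` contains a cube of edge length `1`. -/
theorem ellipsoid_covering (n : ℕ) (hn : 1 ≤ n) (α : Fin n → ℝ) (hα : ∀ i, 0 < α i) :
    List.TFAE
      [ CoversAnyPositionN n {x : EuclideanSpace ℝ (Fin n) | ∑ i, x i ^ 2 / α i ^ 2 ≤ 1},
        ∑ i, 1 / α i ^ 2 ≤ 4,
        ∃ (Q : EuclideanSpace ℝ (Fin n) ≃ₗᵢ[ℝ] EuclideanSpace ℝ (Fin n))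
          (x : EuclideanSpace ℝ (Fin n)),
          (fun y => Q y + x) '' {y : EuclideanSpace ℝ (Fin n) | ∀ i, y i ∈ Icc (0 : ℝ) 1}
            ⊆ {x : EuclideanSpace ℝ (Fin n) | ∑ i, x i ^ 2 / α i ^ 2 ≤ 1} ] := by
  tfae_have 1 → 2 := by
    intro h
    obtain ⟨z, ⟨y, hy, hyz⟩, hz⟩ := h (LinearIsometryEquiv.refl ℝ _) (WithLp.toLp 2 fun _ => 1 / 2)
    have hy' : ∑ i, y i ^ 2 / α i ^ 2 ≤ 1 := hy
    have hle : ∑ i, 1 / α i ^ 2 ≤ ∑ i, 4 * (y i ^ 2 / α i ^ 2) := by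
      refine Finset.sum_le_sum fun i _ => ?_
      obtain ⟨m, hm⟩ := hz i
      have hyi : y i = m - 1 / 2 := by
        rw [← hm, ← hyz]; simp
      have hsq : (1 : ℝ) ≤ 4 * y i ^ 2 := by
        -- `m - 1 / 2` is a half-integer, and `m * (m - 1) ≥ 0` for integers.
        have hm0 : (0 : ℤ) ≤ m * (m - 1) := by
          rcases le_or_gt m 0 with h | h
          · nlinarith
          · exact mul_nonneg h.le (by linarith)
        have hm1 : (0 : ℝ) ≤ m * (m - 1) := by exact_mod_cast hm0
        rw [hyi]; nlinarith
      rw [← mul_div_assoc]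
      exact div_le_div_of_nonneg_right hsq (sq_nonneg _)
    rw [← Finset.mul_sum] at hle
    linarith
  tfae_have 2 → 1 := by
    intro h Q x
    obtain ⟨z, hz⟩ := exists_int_norm_sq_le Finset.univ
      (fun i => scaleMap α (Q.symm (EuclideanSpace.single i 1))) x
    rw [sum_norm_sq_scaleMap] at hz
    let p : EuclideanSpace ℝ (Fin n) := WithLp.toLp 2 fun i => (z i : ℝ)
    refine ⟨p, ⟨Q.symm (p - x), ?_, by simp⟩, fun i => ⟨z i, rfl⟩⟩
    change ∑ i, (Q.symm (p - x)) i ^ 2 / α i ^ 2 ≤ 1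
    rw [← norm_sq_scaleMap, map_eq_sum_single]
    simp only [map_sum, map_smul, PiLp.sub_apply, p]
    linarith
  tfae_have 2 → 3 := by
    intro h
    refine ⟨LinearIsometryEquiv.refl ℝ _, WithLp.toLp 2 fun _ => -(1 / 2), ?_⟩
    rintro _ ⟨y, hy, rfl⟩
    change ∑ i, (y i + -(1 / 2)) ^ 2 / α i ^ 2 ≤ 1
    have hle : ∑ i, (y i + -(1 / 2)) ^ 2 / α i ^ 2 ≤ ∑ i, 1 / 4 * (1 / α i ^ 2) := by
      refine Finset.sum_le_sum fun i _ => ?_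
      obtain ⟨h0, h1⟩ := hy i
      rw [← mul_div_assoc]
      exact div_le_div_of_nonneg_right (by nlinarith) (sq_nonneg _)
    rw [← Finset.mul_sum] at hle
    linarith
  tfae_have 3 → 2 := by
    rintro ⟨Q, x, hsub⟩
    let c : EuclideanSpace ℝ (Fin n) := WithLp.toLp 2 fun _ => 1 / 2
    obtain ⟨e, he, hle⟩ := exists_sign_le_norm_sq Finset.univ (scaleMap α (Q c + x))
      (fun i => scaleMap α (Q (EuclideanSpace.single i 1)))
    rw [sum_norm_sq_scaleMap] at hle
    let d : EuclideanSpace ℝ (Fin n) := WithLp.toLp 2 e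
    have hmem : Q (c + d) + x ∈ {x : EuclideanSpace ℝ (Fin n) | ∑ i, x i ^ 2 / α i ^ 2 ≤ 1} := by
      refine hsub ⟨c + d, fun i => ?_, rfl⟩
      have := abs_le.1 (he i)
      change 1 / 2 + e i ∈ Icc (0 : ℝ) 1
      exact ⟨by linarith, by linarith⟩
    have hq : ‖scaleMap α (Q (c + d) + x)‖ ^ 2 ≤ 1 := by
      rw [norm_sq_scaleMap]; exact hmem
    have hd : scaleMap α (Q c + x) + ∑ i, e i • scaleMap α (Q (EuclideanSpace.single i 1))
        = scaleMap α (Q (c + d) + x) := by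
      rw [map_add Q, add_right_comm, map_add (scaleMap α) (Q c + x), map_eq_sum_single Q d]
      simp only [map_sum, map_smul, d]
    rw [hd] at hle
    have := sq_nonneg ‖scaleMap α (Q c + x)‖
    linarith
  tfae_finish
end
end

section
/- Let T = conv{A, B, C} ⊆ ℝ² be a nondegenerate triangle with side lengths a = |BC|, b = |CA|, c = |AB| satisfying a ≤ b ≤ c, and let Δ be the area of T. Then T contains a lattice point of ℤ² in any position if and only if 2·Δ·(c − 1) ≥ c². -/
/-!
Write `c = |AB|` for the longest side and `D` for the doubled area, so the condition reads
`c² ≤ D (c - 1)`.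

Sufficiency. In any position, let `w` be the vertical extent of the triangle and `l` its longest
horizontal chord, the one through the vertex of middle height. Then `D = w l`, and `w, l ≤ c`
because `c` is the diameter. From `(c - w) (c - l) ≥ 0` and the condition one gets `w + l ≤ w l`.
The heights of the horizontal chords of length at least `1` form an interval of length
`w - w / l ≥ 1`; it contains an integer `k`, and the chord at height `k` contains an integer
point (`lattice_point_of_sorted`).

Necessity. Let `h = D / c` be the altitude on `AB` and suppose `c h < c + h`. As `h ≤ c`, this
forces `h < 2`. Place `AB` horizontally, slightly above a lattice line. Then the triangle meets only
the next lattice line, in a segment of length slightly more than `c (1 - 1 / h) < 1`, and a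
horizontal shift makes this segment avoid the integers (`exists_translation`).

The two parts are linked to the statement by `two_mul_area` (the volume is half the absolute
determinant) and by Heron's formula `four_mul_detTri_sq`, which makes the determinant an isometry
invariant up to sign.
-/

open Set Pointwise Real MeasureTheory

noncomputable section

/-! ### Coordinates in the plane -/

/-- The signed doubled area of the triangle `A B C`. -/
def detTri (A B C : E2) : ℝ :=
  (B 0 - A 0) * (C 1 - A 1) - (B 1 - A 1) * (C 0 - A 0)

lemma dist_sq_coord (A B : E2) : dist A B ^ 2 = (A 0 - B 0) ^ 2 + (A 1 - B 1) ^ 2 := by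
  rw [EuclideanSpace.dist_eq, Real.sq_sqrt (by positivity)]
  simp [Fin.sum_univ_two, Real.dist_eq, sq_abs]

/-- Heron's formula in polynomial form; it shows that `|detTri|` is an isometry invariant. -/
lemma four_mul_detTri_sq (A B C : E2) :
    4 * detTri A B C ^ 2 = 4 * dist A B ^ 2 * dist C A ^ 2 -
      (dist A B ^ 2 + dist C A ^ 2 - dist B C ^ 2) ^ 2 := by
  simp only [dist_sq_coord, detTri]
  ring

lemma mem_convexHull_three {A B C x : E2} :
    x ∈ convexHull ℝ {A, B, C} ↔
      ∃ β γ : ℝ, 0 ≤ β ∧ 0 ≤ γ ∧ β + γ ≤ 1 ∧ x = A + (β • (B - A) + γ • (C - A)) := by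
  constructor
  · rw [convexHull_insert (by simp), mem_convexJoin]
    rintro ⟨a, rfl, b, hb, hx⟩
    rw [convexHull_pair] at hb
    obtain ⟨p, q, hp, hq, hpq, rfl⟩ := hb
    obtain ⟨r, s, hr, hs, hrs, rfl⟩ := hx
    refine ⟨s * p, s * q, by positivity, by positivity, ?_, ?_⟩
    · rw [← mul_add, hpq]; linarith
    · obtain rfl : r = 1 - s := by linarith
      obtain rfl : p = 1 - q := by linarith
      module
  · rintro ⟨β, γ, hβ, hγ, h, rfl⟩
    have hA : A ∈ convexHull ℝ {A, B, C} := subset_convexHull ℝ _ (by simp)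
    have hB : B ∈ convexHull ℝ {A, B, C} := subset_convexHull ℝ _ (by simp)
    have hC : C ∈ convexHull ℝ {A, B, C} := subset_convexHull ℝ _ (by simp)
    have hconv := convex_convexHull ℝ ({A, B, C} : Set E2)
    have := hconv.sum_mem (t := Finset.univ) (w := ![1 - β - γ, β, γ]) (z := ![A, B, C])
      (by intro i _; fin_cases i <;> simp <;> linarith)
      (by simp only [Fin.sum_univ_three, Matrix.cons_val]; ring) (by intro i _; fin_cases i <;> simp <;> assumption)
    simp only [Fin.sum_univ_three, Matrix.cons_val] at this
    convert this using 1
    module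

/-! ### The area of a triangle -/

lemma volume_stdTriangle :
    volume {v : E2 | 0 ≤ v 0 ∧ 0 ≤ v 1 ∧ v 0 + v 1 ≤ 1} = ENNReal.ofReal (1 / 2) := by
  have h1 := (volume_preserving_finTwoArrow ℝ).comp (PiLp.volume_preserving_ofLp (Fin 2))
  -- `regionBetween` is open in the vertical direction, so the closed region is sliced by hand.
  have hset : {v : E2 | 0 ≤ v 0 ∧ 0 ≤ v 1 ∧ v 0 + v 1 ≤ 1} =
      (fun v : E2 => (v 0, v 1)) ⁻¹'
        {p : ℝ × ℝ | p.1 ∈ Icc (0 : ℝ) 1 ∧ p.2 ∈ Icc (0 : ℝ) (1 - p.1)} := by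
    ext v
    simp only [mem_ofPred_eq, mem_preimage, mem_Icc]
    constructor
    · rintro ⟨a, b, c⟩
      exact ⟨⟨a, by linarith⟩, b, by linarith⟩
    · rintro ⟨⟨a, b⟩, c, d⟩
      exact ⟨a, c, by linarith⟩
  have hmeas : MeasurableSet
      {p : ℝ × ℝ | p.1 ∈ Icc (0 : ℝ) 1 ∧ p.2 ∈ Icc (0 : ℝ) (1 - p.1)} := by
    apply IsClosed.measurableSet
    simp only [mem_Icc]
    refine ((isClosed_le ?_ ?_).and (isClosed_le ?_ ?_)).and
      ((isClosed_le ?_ ?_).and (isClosed_le ?_ ?_)) <;> fun_prop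
  rw [hset]
  refine (h1.measure_preimage hmeas.nullMeasurableSet).trans ?_
  rw [Measure.volume_eq_prod, Measure.prod_apply hmeas]
  have hslice : ∀ x : ℝ, volume (Prod.mk x ⁻¹'
      {p : ℝ × ℝ | p.1 ∈ Icc (0 : ℝ) 1 ∧ p.2 ∈ Icc (0 : ℝ) (1 - p.1)}) =
      (Icc (0 : ℝ) 1).indicator (fun x => ENNReal.ofReal (1 - x)) x := by
    intro x
    by_cases hx : x ∈ Icc (0 : ℝ) 1
    · rw [indicator_of_mem hx]
      have : Prod.mk x ⁻¹'
        {p : ℝ × ℝ | p.1 ∈ Icc (0 : ℝ) 1 ∧ p.2 ∈ Icc (0 : ℝ) (1 - p.1)} =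
          Icc 0 (1 - x) := by
        ext y; simp only [mem_preimage, mem_ofPred_eq, hx, true_and]
      rw [this, Real.volume_Icc, sub_zero]
    · rw [indicator_of_notMem hx]
      have : Prod.mk x ⁻¹'
        {p : ℝ × ℝ | p.1 ∈ Icc (0 : ℝ) 1 ∧ p.2 ∈ Icc (0 : ℝ) (1 - p.1)} = ∅ := by
        ext y; simp only [mem_preimage, mem_ofPred_eq, hx, false_and, mem_empty_iff_false]
      rw [this, measure_empty]
  simp_rw [hslice]
  rw [lintegral_indicator measurableSet_Icc,
    ← ofReal_integral_eq_lintegral_ofReal]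
  · rw [integral_Icc_eq_integral_Ioc, ← intervalIntegral.integral_of_le zero_le_one]
    congr 1
    rw [intervalIntegral.integral_sub (by simp) (by simp)]
    norm_num
  · exact (by fun_prop : Continuous fun x : ℝ => 1 - x).continuousOn.integrableOn_Icc
  · exact (ae_restrict_iff' measurableSet_Icc).2
      (Filter.Eventually.of_forall fun x hx => by simpa using hx.2)

lemma two_mul_area (A B C : E2) :
    2 * (volume (convexHull ℝ {A, B, C} : Set E2)).toReal = |detTri A B C| := by
  let b := (EuclideanSpace.basisFun (Fin 2) ℝ).toBasis
  let M : Matrix (Fin 2) (Fin 2) ℝ := !![B 0 - A 0, C 0 - A 0; B 1 - A 1, C 1 - A 1]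
  let L : E2 →ₗ[ℝ] E2 := Matrix.toLin b b M
  have hL : ∀ v : E2, L v = v 0 • (B - A) + v 1 • (C - A) := by
    intro v
    ext i
    fin_cases i <;>
      simp [L, M, b, Matrix.toLin_apply, Matrix.mulVec, dotProduct, Fin.sum_univ_two] <;> ring
  have hdet : LinearMap.det L = detTri A B C := by
    simp only [L, LinearMap.det_toLin, M, Matrix.det_fin_two_of, detTri]
    ring
  have hhull : (convexHull ℝ {A, B, C} : Set E2) =
      (fun y => A + y) '' (L '' {v : E2 | 0 ≤ v 0 ∧ 0 ≤ v 1 ∧ v 0 + v 1 ≤ 1}) := by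
    ext x
    rw [mem_convexHull_three]
    constructor
    · rintro ⟨β, γ, hβ, hγ, h, rfl⟩
      refine ⟨_, ⟨!₂[β, γ], by simpa using ⟨hβ, hγ, h⟩, rfl⟩, ?_⟩
      simp [hL]
    · rintro ⟨_, ⟨v, ⟨h0, h1, h2⟩, rfl⟩, rfl⟩
      exact ⟨v 0, v 1, h0, h1, h2, by simp [hL]⟩
  rw [hhull, image_add_left, measure_preimage_add, Measure.addHaar_image_linearMap,
    volume_stdTriangle, hdet, ENNReal.toReal_mul, ENNReal.toReal_ofReal (abs_nonneg _),
    ENNReal.toReal_ofReal (by norm_num)]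
  ring

/-! ### Lattice points on long horizontal chords -/

lemma exists_int_between {u v : ℝ} (h : 1 ≤ |v - u|) :
    ∃ (m : ℤ) (ν : ℝ), 0 ≤ ν ∧ ν ≤ 1 ∧ (m : ℝ) = u + ν * (v - u) := by
  have key : ∃ m : ℤ, (m : ℝ) ∈ Set.uIcc u v := by
    rcases le_total u v with huv | huv
    · rw [abs_of_nonneg (by linarith)] at h
      exact ⟨⌊v⌋, by rw [uIcc_of_le huv]; exact ⟨by linarith [Int.lt_floor_add_one v], Int.floor_le v⟩⟩
    · rw [abs_of_nonpos (by linarith)] at h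
      exact ⟨⌊u⌋, by rw [uIcc_of_ge huv]; exact ⟨by linarith [Int.lt_floor_add_one u], Int.floor_le u⟩⟩
  obtain ⟨m, hm⟩ := key
  rw [← segment_eq_uIcc, segment_eq_image'] at hm
  obtain ⟨ν, hν, hm⟩ := hm
  exact ⟨m, ν, hν.1, hν.2, by rw [← hm]; simp⟩

/-- The horizontal chord through `Q` ends at the point `P + t (R - P)` of the opposite side. Its
image under the homothety with centre `P` and ratio `μ` lies in the triangle; if that image has
length at least `1` and lies at the integer height `k`, it contains a lattice point. -/
lemma lattice_point_of_chord {P Q R : E2} {t μ : ℝ} {k : ℤ} (ht0 : 0 ≤ t) (ht1 : t ≤ 1)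
    (hQ : Q 1 = P 1 + t * (R 1 - P 1)) (hμ0 : 0 ≤ μ) (hμ1 : μ ≤ 1)
    (hlen : 1 ≤ μ * |P 0 + t * (R 0 - P 0) - Q 0|) (hk : (k : ℝ) = P 1 + μ * (Q 1 - P 1)) :
    ∃ z ∈ convexHull ℝ {P, Q, R}, z ∈ latticeZ2 := by
  have hlen' : 1 ≤ |(P 0 + μ * (t * (R 0 - P 0))) - (P 0 + μ * (Q 0 - P 0))| := by
    calc (1 : ℝ) ≤ μ * |P 0 + t * (R 0 - P 0) - Q 0| := hlen
      _ = |μ * (P 0 + t * (R 0 - P 0) - Q 0)| := by rw [abs_mul, abs_of_nonneg hμ0]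
      _ = _ := by congr 1; ring
  obtain ⟨m, ν, hν0, hν1, hm⟩ := exists_int_between hlen'
  have hν : 0 ≤ 1 - ν := by linarith
  refine ⟨P + ((μ * (1 - ν)) • (Q - P) + (μ * ν * t) • (R - P)),
    mem_convexHull_three.2 ⟨_, _, by positivity, by positivity, ?_, rfl⟩, ?_⟩
  · have : μ * ν * t ≤ μ * ν := mul_le_of_le_one_right (by positivity) ht1
    linarith
  · intro i
    fin_cases i
    · refine ⟨m, ?_⟩
      simp only [Fin.zero_eta, PiLp.add_apply, PiLp.smul_apply, PiLp.sub_apply, smul_eq_mul, hm]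
      ring
    · refine ⟨k, ?_⟩
      simp only [Fin.mk_one, PiLp.add_apply, PiLp.smul_apply, PiLp.sub_apply, smul_eq_mul, hk]
      rw [hQ]; ring

/-- If `w` is the height of the triangle in the vertical direction and `l` its longest horizontal
chord, then `w * l` is the doubled area, `w, l ≤ c`, and `(c - w) * (c - l) ≥ 0` turns the
hypothesis into `w + l ≤ w * l`. Hence the heights of the horizontal chords of length at
least `1` fill an interval of length `w - w / l ≥ 1`. -/
lemma lattice_point_of_sorted {P Q R : E2} {c : ℝ} (hPQ : P 1 ≤ Q 1) (hQR : Q 1 ≤ R 1)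
    (hc : 0 < c) (h1 : dist P Q ≤ c) (h2 : dist Q R ≤ c) (h3 : dist P R ≤ c)
    (hD : 0 < |detTri P Q R|) (hcond : c ^ 2 ≤ |detTri P Q R| * (c - 1)) :
    ∃ z ∈ convexHull ℝ {P, Q, R}, z ∈ latticeZ2 := by
  have coord : ∀ {X Y : E2}, dist X Y ≤ c → ∀ i, |X i - Y i| ≤ c := by
    intro X Y h i
    have := PiLp.norm_apply_le (X - Y) i
    rw [← dist_eq_norm] at this
    simpa using this.trans h
  have hw : 0 < R 1 - P 1 := by
    rcases (sub_nonneg.2 (hPQ.trans hQR)).lt_or_eq with h | h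
    · exact h
    · exfalso
      have e1 : R 1 = P 1 := by linarith
      have e2 : Q 1 = P 1 := by linarith
      simp [detTri, e1, e2] at hD
  set w := R 1 - P 1 with hwdef
  set t := (Q 1 - P 1) / w with ht
  have ht0 : 0 ≤ t := div_nonneg (by linarith) hw.le
  have ht1 : t ≤ 1 := (div_le_one hw).2 (by linarith)
  have hQ : Q 1 = P 1 + t * w := by rw [ht]; field_simp; ring
  set l := |P 0 + t * (R 0 - P 0) - Q 0| with hl
  have hwl : w * l = |detTri P Q R| := by
    have e : w * l = |w * (P 0 + t * (R 0 - P 0) - Q 0)| := by rw [abs_mul, abs_of_pos hw]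
    rw [e, ← abs_neg, detTri]
    congr 1
    rw [hQ]
    ring
  have hl0 : 0 < l := by
    rw [← hwl] at hD
    exact pos_of_mul_pos_right hD hw.le
  have hlc : l ≤ c := by
    have e1 := coord h1 0
    have e2 := coord h2 0
    rw [abs_le] at e1 e2
    rw [hl, abs_le]
    constructor <;> nlinarith
  have hwc : w ≤ c := by
    have := coord h3 1
    rw [abs_sub_comm] at this
    exact (le_abs_self _).trans this
  have hsum : w + l ≤ w * l := by
    rw [← hwl] at hcond
    have : c * (w + l) ≤ c * (w * l) := by
      nlinarith [mul_nonneg (sub_nonneg.2 hwc) (sub_nonneg.2 hlc)]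
    exact le_of_mul_le_mul_left this hc
  have hl1 : 1 ≤ l := by
    by_contra! h
    nlinarith
  have hlo : P 1 + (Q 1 - P 1) / l + 1 ≤ R 1 - (R 1 - Q 1) / l := by
    have e : w / l + 1 ≤ w := by
      rw [← le_sub_iff_add_le, div_le_iff₀ hl0]; linarith
    have e' : (Q 1 - P 1) / l + (R 1 - Q 1) / l = w / l := by rw [← add_div, hwdef]; ring_nf
    linarith
  set k := ⌈P 1 + (Q 1 - P 1) / l⌉ with hk
  have hk1 : P 1 + (Q 1 - P 1) / l ≤ k := Int.le_ceil _
  have hk2 : (k : ℝ) ≤ R 1 - (R 1 - Q 1) / l := (Int.ceil_lt_add_one _).le.trans hlo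
  rcases le_total (k : ℝ) (Q 1) with hkQ | hkQ
  · rcases hPQ.lt_or_eq with h | h
    · have h' : 0 < Q 1 - P 1 := by linarith
      refine lattice_point_of_chord (t := t) (μ := (k - P 1) / (Q 1 - P 1)) (k := k)
        ht0 ht1 hQ (div_nonneg ?_ h'.le) ((div_le_one h').2 (by linarith)) ?_ ?_
      · have : 0 ≤ (Q 1 - P 1) / l := by positivity
        linarith
      · rw [← hl, div_mul_eq_mul_div, le_div_iff₀ h', one_mul, ← div_le_iff₀ hl0]
        linarith
      · field_simp; ring
    · rw [h] at hk1
      simp only [sub_self, zero_div, add_zero] at hk1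
      exact lattice_point_of_chord (t := t) (μ := 1) (k := k) ht0 ht1 hQ zero_le_one le_rfl
        (by rw [one_mul]; exact hl1) (by linarith)
  · have hperm : ({P, Q, R} : Set E2) = {R, Q, P} := by ext; simp; tauto
    have hl' : |R 0 + (1 - t) * (P 0 - R 0) - Q 0| = l := by rw [hl]; congr 1; ring
    have hQ' : Q 1 = R 1 + (1 - t) * (P 1 - R 1) := by rw [hQ, hwdef]; ring
    rw [hperm]
    rcases hQR.lt_or_eq with h | h
    · have h' : 0 < R 1 - Q 1 := by linarith
      refine lattice_point_of_chord (t := 1 - t) (μ := (R 1 - k) / (R 1 - Q 1)) (k := k)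
        (by linarith) (by linarith) hQ' (div_nonneg ?_ h'.le)
        ((div_le_one h').2 (by linarith)) ?_ ?_
      · have : 0 ≤ (R 1 - Q 1) / l := by positivity
        linarith
      · rw [hl', div_mul_eq_mul_div, le_div_iff₀ h', one_mul, ← div_le_iff₀ hl0]
        linarith
      · field_simp; ring
    · rw [h] at hk2
      simp only [sub_self, zero_div, sub_zero] at hk2
      exact lattice_point_of_chord (t := 1 - t) (μ := 1) (k := k) (by linarith) (by linarith)
        hQ' zero_le_one le_rfl (by rw [one_mul, hl']; exact hl1) (by linarith)

lemma lattice_point_of_triangle {P Q R : E2} {c : ℝ}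
    (hc : 0 < c) (h1 : dist P Q ≤ c) (h2 : dist Q R ≤ c) (h3 : dist P R ≤ c)
    (hD : 0 < |detTri P Q R|) (hcond : c ^ 2 ≤ |detTri P Q R| * (c - 1)) :
    ∃ z ∈ convexHull ℝ {P, Q, R}, z ∈ latticeZ2 := by
  have swap12 : ∀ X Y Z : E2, |detTri X Y Z| = |detTri Y X Z| := by
    intro X Y Z
    rw [← abs_neg]; congr 1; simp only [detTri]; ring
  have swap23 : ∀ X Y Z : E2, |detTri X Y Z| = |detTri X Z Y| := by
    intro X Y Z
    rw [← abs_neg]; congr 1; simp only [detTri]; ring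
  have h1' := dist_comm P Q ▸ h1
  have h2' := dist_comm Q R ▸ h2
  have h3' := dist_comm P R ▸ h3
  rcases le_total (P 1) (Q 1) with a | a <;> rcases le_total (Q 1) (R 1) with b | b <;>
    rcases le_total (P 1) (R 1) with d | d
  · exact lattice_point_of_sorted a b hc h1 h2 h3 hD hcond
  · exact lattice_point_of_sorted a b hc h1 h2 h3 hD hcond
  · rw [swap23] at hD hcond
    rw [show ({P, Q, R} : Set E2) = {P, R, Q} by ext; simp; tauto]
    exact lattice_point_of_sorted d b hc h3 h2' h1 hD hcond
  · rw [swap23, swap12] at hD hcond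
    rw [show ({P, Q, R} : Set E2) = {R, P, Q} by ext; simp; tauto]
    exact lattice_point_of_sorted d a hc h3' h1 h2' hD hcond
  · rw [swap12] at hD hcond
    rw [show ({P, Q, R} : Set E2) = {Q, P, R} by ext; simp; tauto]
    exact lattice_point_of_sorted a d hc h1' h3 h2 hD hcond
  · rw [swap12, swap23] at hD hcond
    rw [show ({P, Q, R} : Set E2) = {Q, R, P} by ext; simp; tauto]
    exact lattice_point_of_sorted b d hc h2 h3' h1' hD hcond
  · rw [swap12, swap23, swap12] at hD hcond
    rw [show ({P, Q, R} : Set E2) = {R, Q, P} by ext; simp; tauto]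
    exact lattice_point_of_sorted b a hc h2' h1' h3' hD hcond
  · rw [swap12, swap23, swap12] at hD hcond
    rw [show ({P, Q, R} : Set E2) = {R, Q, P} by ext; simp; tauto]
    exact lattice_point_of_sorted b a hc h2' h1' h3' hD hcond

/-! ### A position without lattice points -/

/-- The isometry of the plane with orthonormal rows `(u, v)` and `(-σ v, σ u)`. -/
def planeIsometry (u v σ : ℝ) (huv : u ^ 2 + v ^ 2 = 1) (hσ : σ ^ 2 = 1) : E2 ≃ₗᵢ[ℝ] E2 :=
  LinearIsometry.toLinearIsometryEquiv
    { toFun := fun y => !₂[u * y 0 + v * y 1, σ * (u * y 1 - v * y 0)]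
      map_add' := by intro x y; ext i; fin_cases i <;> simp <;> ring
      map_smul' := by intro r x; ext i; fin_cases i <;> simp <;> ring
      norm_map' := by
        intro x
        rw [EuclideanSpace.norm_eq, EuclideanSpace.norm_eq]
        congr 1
        simp only [Fin.sum_univ_two, Real.norm_eq_abs, sq_abs]
        simp
        linear_combination (x 0 ^ 2 + x 1 ^ 2) * huv + (u * x 1 - v * x 0) ^ 2 * hσ } rfl

lemma planeIsometry_apply (u v σ : ℝ) (huv : u ^ 2 + v ^ 2 = 1) (hσ : σ ^ 2 = 1) (y : E2) :
    planeIsometry u v σ huv hσ y = !₂[u * y 0 + v * y 1, σ * (u * y 1 - v * y 0)] := rfl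

/-- The side `A B` can be placed horizontally with `C` above it, at height `|detTri| / |AB|`. -/
lemma exists_isometry_base (A B C : E2) (hc : 0 < dist A B) :
    ∃ (Q : E2 ≃ₗᵢ[ℝ] E2), Q (B - A) 0 = dist A B ∧ Q (B - A) 1 = 0 ∧
      Q (C - A) 1 = |detTri A B C| / dist A B := by
  obtain ⟨σ, hσ, hσD⟩ : ∃ σ : ℝ, σ ^ 2 = 1 ∧ σ * detTri A B C = |detTri A B C| := by
    rcases le_total 0 (detTri A B C) with h | h
    · exact ⟨1, by norm_num, by rw [abs_of_nonneg h, one_mul]⟩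
    · exact ⟨-1, by norm_num, by rw [abs_of_nonpos h]; ring⟩
  have hd := dist_sq_coord A B
  set c := dist A B
  refine ⟨planeIsometry ((B 0 - A 0) / c) ((B 1 - A 1) / c) σ ?_ hσ, ?_, ?_, ?_⟩
  · field_simp; linarith
  · rw [planeIsometry_apply]
    simp
    field_simp
    linarith
  · rw [planeIsometry_apply]
    simp
    right
    ring
  · rw [planeIsometry_apply, ← hσD, detTri]
    simp
    ring

/-- With the base of length `c` at a small height `ε > 0` and the apex below height `2`, only the
lattice line at height `1` can meet the triangle; it does so in a segment of
length `c * (1 - (1 - ε) / h) < 1`, which can be moved between two consecutive integers. -/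
lemma exists_translation {c h p : ℝ} (hc : 0 < c) (hh : 0 < h) (hhc : h ≤ c)
    (hlt : c * h < c + h) :
    ∃ x y : ℝ, ∀ β γ : ℝ, 0 ≤ β → 0 ≤ γ → β + γ ≤ 1 → ∀ m k : ℤ,
      β * c + γ * p + x = m → γ * h + y = k → False := by
  have hh2 : h < 2 := by
    by_contra! h2
    nlinarith
  obtain ⟨ε, hε0, hε1, hε2, hε3⟩ :
      ∃ ε : ℝ, 0 < ε ∧ ε < 1 ∧ h + ε < 2 ∧ c * ε < c + h - c * h := by
    have hδ : 0 < (c + h - c * h) / c := div_pos (by linarith) hc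
    obtain ⟨ε, h0, h1⟩ := exists_between
      (lt_min (lt_min one_pos (sub_pos.2 hh2)) hδ : (0 : ℝ) < _)
    rw [lt_min_iff, lt_min_iff, lt_div_iff₀ hc] at h1
    exact ⟨ε, h0, h1.1.1, by linarith [h1.1.2], by linarith [h1.2]⟩
  set g := (1 - ε) / h with hg
  have hgh : g * h = 1 - ε := by rw [hg]; field_simp
  have hlen : c * (1 - g) < 1 := by
    have : c * (1 - g) * h < 1 * h := by
      have : c * (1 - g) * h = c * h - c * (g * h) := by ring
      rw [this, hgh]; linarith
    exact lt_of_mul_lt_mul_right this hh.le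
  obtain ⟨η, hη0, hη1⟩ := exists_between
    (lt_min one_pos (sub_pos.2 hlen) : (0 : ℝ) < _)
  rw [lt_min_iff] at hη1
  refine ⟨η - g * p, ε, fun β γ hβ hγ hs m k hm hk => ?_⟩
  have hγ1 : γ ≤ 1 := by linarith
  have hk0 : (0 : ℝ) < k := by rw [← hk]; positivity
  have hk2 : (k : ℝ) < 2 := by rw [← hk]; nlinarith
  have hk1 : k = 1 := by
    have a : 0 < k := by exact_mod_cast hk0
    have b : k < 2 := by exact_mod_cast hk2
    omega
  have hγg : γ = g := by
    rw [hk1, Int.cast_one] at hk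
    apply mul_right_cancel₀ hh.ne'
    linarith
  subst hγg
  have hm' : (m : ℝ) = β * c + η := by rw [← hm]; ring
  have hm0 : (0 : ℝ) < m := by rw [hm']; positivity
  have hm1 : (m : ℝ) < 1 := by
    have : c * β ≤ c * (1 - g) := mul_le_mul_of_nonneg_left (by linarith) hc.le
    rw [hm']; linarith [hη1.2]
  have a : 0 < m := by exact_mod_cast hm0
  have b : m < 1 := by exact_mod_cast hm1
  omega

lemma detTri_ne_zero {A B C : E2} (h : AffineIndependent ℝ ![A, B, C]) :
    detTri A B C ≠ 0 := by
  intro h0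
  rw [affineIndependent_iff_not_collinear_set] at h
  apply h
  by_cases hAB : B = A
  · subst hAB
    simpa using collinear_pair ℝ B C
  have hd := dist_sq_coord B A
  have hpos : 0 < dist B A ^ 2 := by
    have := dist_pos.2 hAB
    positivity
  rw [hd] at hpos
  rw [collinear_iff_of_mem (p₀ := A) (by simp)]
  refine ⟨B - A, ?_⟩
  simp only [mem_insert_iff, mem_singleton_iff, forall_eq_or_imp, forall_eq]
  refine ⟨⟨0, by simp⟩, ⟨1, by simp⟩,
    ⟨((C 0 - A 0) * (B 0 - A 0) + (C 1 - A 1) * (B 1 - A 1)) /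
      ((B 0 - A 0) ^ 2 + (B 1 - A 1) ^ 2), ?_⟩⟩
  rw [detTri] at h0
  ext i
  fin_cases i
  · simp
    field_simp
    linear_combination (-(B 1 - A 1)) * h0
  · simp
    field_simp
    linear_combination (B 0 - A 0) * h0

/-- Niven–Zuckerman: a nondegenerate triangle with side lengths `a ≤ b ≤ c` and area `Δ`
contains a lattice point of `ℤ²` in any position iff `2Δ(c − 1) ≥ c²`. -/
theorem triangle_covering (A B C : E2) (hABC : AffineIndependent ℝ ![A, B, C])
    (hab : dist B C ≤ dist C A) (hbc : dist C A ≤ dist A B) :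
    CoversAnyPosition (convexHull ℝ {A, B, C}) ↔
      dist A B ^ 2 ≤
        2 * (volume (convexHull ℝ {A, B, C} : Set E2)).toReal * (dist A B - 1) := by
  have hdet := detTri_ne_zero hABC
  have hD : 0 < |detTri A B C| := abs_pos.2 hdet
  have hheron := four_mul_detTri_sq A B C
  have hc : 0 < dist A B := by
    rcases (dist_nonneg : 0 ≤ dist A B).lt_or_eq with h | h
    · exact h
    · rw [eq_comm, dist_eq_zero] at h
      subst h
      simp [detTri] at hdet
  rw [two_mul_area]
  constructor
  · intro hcov
    by_contra! hlt
    obtain ⟨Q, hB0, hB1, hC1⟩ := exists_isometry_base A B C hc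
    have hDc : |detTri A B C| ≤ dist A B ^ 2 := by
      refine abs_le_of_sq_le_sq ?_ (by positivity)
      have hb : dist C A ^ 2 ≤ dist A B ^ 2 := by gcongr
      nlinarith [sq_nonneg (dist A B ^ 2 + dist C A ^ 2 - dist B C ^ 2), sq_nonneg (dist A B),
        mul_le_mul_of_nonneg_left hb (sq_nonneg (dist A B))]
    have hDh : dist A B * (|detTri A B C| / dist A B) = |detTri A B C| := by field_simp
    obtain ⟨x, y, hxy⟩ := exists_translation (c := dist A B)
      (h := |detTri A B C| / dist A B) (p := Q (C - A) 0) hc (div_pos hD hc)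
      (by rw [div_le_iff₀ hc]; linarith)
      (by
        rw [hDh]
        refine lt_of_mul_lt_mul_left ?_ hc.le
        rw [mul_add, hDh]
        linarith)
    obtain ⟨_, ⟨z, hz, rfl⟩, hlat⟩ := hcov Q (!₂[x, y] - Q A)
    obtain ⟨β, γ, hβ, hγ, hs, rfl⟩ := mem_convexHull_three.1 hz
    obtain ⟨m, hm⟩ := hlat 0
    obtain ⟨k, hk⟩ := hlat 1
    have himg : Q (A + (β • (B - A) + γ • (C - A))) + (!₂[x, y] - Q A) =
        β • Q (B - A) + γ • Q (C - A) + !₂[x, y] := by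
      rw [map_add, map_add, map_smul, map_smul]
      abel
    simp only [himg] at hm hk
    refine hxy β γ hβ hγ hs m k ?_ ?_
    · rw [← hm, ← hB0]
      simp only [PiLp.add_apply, PiLp.smul_apply, smul_eq_mul]
      simp
    · rw [← hk, ← hC1]
      simp only [PiLp.add_apply, PiLp.smul_apply, smul_eq_mul, hB1]
      simp
  · intro hcond Q x
    have hdist : ∀ X Y : E2, dist (Q X + x) (Q Y + x) = dist X Y := by
      intro X Y
      rw [dist_add_right, Q.dist_map]
    have hdet' : |detTri (Q A + x) (Q B + x) (Q C + x)| = |detTri A B C| := by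
      rw [← sq_eq_sq_iff_abs_eq_abs]
      have := four_mul_detTri_sq (Q A + x) (Q B + x) (Q C + x)
      simp only [hdist] at this
      linarith
    obtain ⟨z, hz, hlat⟩ := lattice_point_of_triangle (P := Q A + x) (Q := Q B + x)
      (R := Q C + x) hc (hdist A B).le (by rw [hdist]; exact hab.trans hbc)
      (by rw [hdist, dist_comm]; exact hbc) (by rw [hdet']; exact hD)
      (by rw [hdet']; exact hcond)
    refine ⟨z, ?_, hlat⟩
    obtain ⟨β, γ, hβ, hγ, hs, rfl⟩ := mem_convexHull_three.1 hz
    refine ⟨_, mem_convexHull_three.2 ⟨β, γ, hβ, hγ, hs, rfl⟩, ?_⟩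
    simp only [map_add, map_smul, map_sub, add_sub_add_right_eq_sub]
    abel
end
end
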